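/- Let f ∈ ℬ be convenient and Newton nondegenerate. Then for every β ∈ ℚ the set {v ∈ ℕⁿ : ν(v) = β} is finite, and for every α ∈ ℚ one has dim_ℂ gr^𝒩_α(ℬ/ℒ) = Σ_{k=0}^{n} (−1)^k · binom(n,k) · card{v ∈ ℕⁿ : ν(v) = α − k} (equality in ℤ). Equivalently, the Hilbert–Poincaré series of the graded ring gr^𝒩(ℬ/ℒ) equals (1−z)^n · Σ_{v ∈ ℕⁿ} z^{ν(v)}. -/

import Mathlib

open MvPolynomial

namespace ToricNewton

section
variable {σ : Type*} [Fintype σ] [DecidableEq σ]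

/-- Coercion of a lattice point of `ℕ^σ` into `ℝ^σ`. -/
def natToR (v : σ → ℕ) : σ → ℝ := fun i => (v i : ℝ)

/-- Coercion of an exponent (finitely supported) into `ℝ^σ`. -/
def toR (m : σ →₀ ℕ) : σ → ℝ := fun i => (m i : ℝ)

/-- The Newton polytope of a polynomial: the convex hull of `{0} ∪ supp f`. -/
noncomputable def newtonPolytope (f : MvPolynomial σ ℂ) : Set (σ → ℝ) :=
  convexHull ℝ ({0} ∪ (toR '' (f.support : Set (σ →₀ ℕ))))

/-- The Newton function `ν`, which for a convenient polynomial is the gauge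
(Minkowski functional) of the Newton polytope. -/
noncomputable def nu (f : MvPolynomial σ ℂ) (x : σ → ℝ) : ℝ :=
  gauge (newtonPolytope f) x

/-- `f` is convenient if for each variable `i` some pure power `uᵢ^k`, `k ≥ 1`,
occurs in `f` with nonzero coefficient. -/
def Convenient (f : MvPolynomial σ ℂ) : Prop :=
  ∀ i : σ, ∃ k : ℕ, 1 ≤ k ∧ f.coeff (Finsupp.single i k) ≠ 0

/-- `Δ` is a (nonempty exposed) closed face of `P`. -/
def IsFace (P Δ : Set (σ → ℝ)) : Prop :=
  Δ.Nonempty ∧ ∃ (l : (σ → ℝ) →ₗ[ℝ] ℝ) (c : ℝ),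
    (∀ x ∈ P, l x ≤ c) ∧ Δ = {x ∈ P | l x = c}

/-- A face of the Newton boundary: a closed face of the Newton polytope not
containing the origin. -/
def NBFace (f : MvPolynomial σ ℂ) (Δ : Set (σ → ℝ)) : Prop :=
  IsFace (newtonPolytope f) Δ ∧ (0 : σ → ℝ) ∉ Δ

open Classical in
/-- The truncation `g_Δ` of `g` to the monomials whose exponents lie in `Δ`. -/
noncomputable def faceRestrict (Δ : Set (σ → ℝ)) (g : MvPolynomial σ ℂ) : MvPolynomial σ ℂ :=
  ∑ m ∈ g.support, if toR m ∈ Δ then monomial m (g.coeff m) else 0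

/-- `f` is Newton nondegenerate: for every closed face `Δ` of the Newton boundary
the system `(u₁ ∂f/∂u₁)_Δ = ⋯ = (uₙ ∂f/∂uₙ)_Δ = 0` has no solution in `(ℂ*)ⁿ`. -/
def Nondegenerate (f : MvPolynomial σ ℂ) : Prop :=
  ∀ Δ : Set (σ → ℝ), NBFace f Δ →
    ¬ ∃ x : σ → ℂ, (∀ i, x i ≠ 0) ∧
        ∀ i, eval x (faceRestrict Δ (X i * pderiv i f)) = 0

/-- The ideal `ℒ` generated by the `uᵢ ∂f/∂uᵢ`. -/
noncomputable def LIdeal (f : MvPolynomial σ ℂ) : Ideal (MvPolynomial σ ℂ) :=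
  Ideal.span (Set.range fun i => X i * pderiv i f)

/-- The Jacobian ideal `ℐ` generated by the `∂f/∂uᵢ`. -/
noncomputable def IIdeal (f : MvPolynomial σ ℂ) : Ideal (MvPolynomial σ ℂ) :=
  Ideal.span (Set.range fun i => pderiv i f)

/-- The Newton filtration `𝒩_α ℬ`: the span of the monomials `u^m` with `ν(m) ≤ α`. -/
noncomputable def Nle (f : MvPolynomial σ ℂ) (α : ℝ) : Submodule ℂ (MvPolynomial σ ℂ) where
  carrier := {g | ∀ m ∈ g.support, nu f (toR m) ≤ α}
  zero_mem' := by simp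
  add_mem' := by
    intro a b ha hb m hm
    rcases Finset.mem_union.mp (MvPolynomial.support_add hm) with h | h
    · exact ha m h
    · exact hb m h
  smul_mem' := by
    intro c a ha m hm
    exact ha m (MvPolynomial.support_smul hm)

/-- The filtration `𝒩_{<α} ℬ`. -/
noncomputable def Nlt (f : MvPolynomial σ ℂ) (α : ℝ) : Submodule ℂ (MvPolynomial σ ℂ) where
  carrier := {g | ∀ m ∈ g.support, nu f (toR m) < α}
  zero_mem' := by simp
  add_mem' := by
    intro a b ha hb m hm
    rcases Finset.mem_union.mp (MvPolynomial.support_add hm) with h | h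
    · exact ha m h
    · exact hb m h
  smul_mem' := by
    intro c a ha m hm
    exact ha m (MvPolynomial.support_smul hm)

/-- The twisted filtration `W_α ℬ`: the span of the monomials `u^m` with
`ν(m + (1,…,1)) ≤ α`. -/
noncomputable def Wle (f : MvPolynomial σ ℂ) (α : ℝ) : Submodule ℂ (MvPolynomial σ ℂ) where
  carrier := {g | ∀ m ∈ g.support, nu f (toR m + 1) ≤ α}
  zero_mem' := by simp
  add_mem' := by
    intro a b ha hb m hm
    rcases Finset.mem_union.mp (MvPolynomial.support_add hm) with h | h
    · exact ha m h
    · exact hb m h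
  smul_mem' := by
    intro c a ha m hm
    exact ha m (MvPolynomial.support_smul hm)

/-- The twisted filtration `W_{<α} ℬ`. -/
noncomputable def Wlt (f : MvPolynomial σ ℂ) (α : ℝ) : Submodule ℂ (MvPolynomial σ ℂ) where
  carrier := {g | ∀ m ∈ g.support, nu f (toR m + 1) < α}
  zero_mem' := by simp
  add_mem' := by
    intro a b ha hb m hm
    rcases Finset.mem_union.mp (MvPolynomial.support_add hm) with h | h
    · exact ha m h
    · exact hb m h
  smul_mem' := by
    intro c a ha m hm
    exact ha m (MvPolynomial.support_smul hm)

/-- The graded piece `gr^𝒩_α(ℬ/ℒ) = (𝒩_α ℬ + ℒ)/(𝒩_{<α} ℬ + ℒ)`, realized as the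
image of `𝒩_α ℬ + ℒ` in `ℬ/(𝒩_{<α} ℬ + ℒ)`. -/
noncomputable def grN (f : MvPolynomial σ ℂ) (α : ℝ) :
    Submodule ℂ (MvPolynomial σ ℂ ⧸ (Nlt f α ⊔ (LIdeal f).restrictScalars ℂ)) :=
  Submodule.map (Nlt f α ⊔ (LIdeal f).restrictScalars ℂ).mkQ
    (Nle f α ⊔ (LIdeal f).restrictScalars ℂ)

/-- `dim_ℂ gr^𝒩_α(ℬ/ℒ)`. -/
noncomputable def grDim (f : MvPolynomial σ ℂ) (α : ℝ) : ℕ :=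
  Module.finrank ℂ (grN f α)

/-- The graded piece `gr^W_α(ℬ/ℐ) = (W_α ℬ + ℐ)/(W_{<α} ℬ + ℐ)`. -/
noncomputable def grW (f : MvPolynomial σ ℂ) (α : ℝ) :
    Submodule ℂ (MvPolynomial σ ℂ ⧸ (Wlt f α ⊔ (IIdeal f).restrictScalars ℂ)) :=
  Submodule.map (Wlt f α ⊔ (IIdeal f).restrictScalars ℂ).mkQ
    (Wle f α ⊔ (IIdeal f).restrictScalars ℂ)

/-- `dim_ℂ gr^W_α(ℬ/ℐ)`. -/
noncomputable def grWDim (f : MvPolynomial σ ℂ) (α : ℝ) : ℕ :=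
  Module.finrank ℂ (grW f α)

/-- The dimension of a face, i.e. of the direction of its affine span. -/
noncomputable def faceDim (Δ : Set (σ → ℝ)) : ℕ :=
  Module.finrank ℝ (affineSpan ℝ Δ).direction

/-- `Δ` is a simplex: the convex hull of an affinely independent family. -/
def IsSimplex (Δ : Set (σ → ℝ)) : Prop :=
  ∃ (k : ℕ) (p : Fin (k + 1) → (σ → ℝ)), AffineIndependent ℝ p ∧ Δ = convexHull ℝ (Set.range p)

/-- The union of the coordinate hyperplanes. -/
def coordHyperplanes (σ : Type*) : Set (σ → ℝ) := ⋃ i : σ, {x : σ → ℝ | x i = 0}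

/-- `Box(Δ)`: the set of combinations `Σ q_ℓ b_ℓ`, `q_ℓ ∈ [0,1)`, of the vertices
(extreme points) of `Δ`. -/
def Box (Δ : Set (σ → ℝ)) : Set (σ → ℝ) :=
  {x | ∃ s : Finset (σ → ℝ), ↑s ⊆ Δ.extremePoints ℝ ∧
      ∃ q : (σ → ℝ) → ℝ, (∀ b ∈ s, 0 ≤ q b ∧ q b < 1) ∧ x = ∑ b ∈ s, q b • b}

/-- `Δ ∈ ℱ(P)`: a closed face of the Newton polytope of `f` not contained in the
union of the coordinate hyperplanes. -/
def FcalMem (f : MvPolynomial σ ℂ) (Δ : Set (σ → ℝ)) : Prop :=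
  IsFace (newtonPolytope f) Δ ∧ ¬ Δ ⊆ coordHyperplanes σ

/-- `Box(P)`: the union of `Box(Δ)` over the closed faces of the Newton boundary
not contained in the union of the coordinate hyperplanes. -/
def BoxP (f : MvPolynomial σ ℂ) : Set (σ → ℝ) :=
  ⋃ Δ ∈ {Δ : Set (σ → ℝ) | NBFace f Δ ∧ ¬ Δ ⊆ coordHyperplanes σ}, Box Δ

/-- The cone `ℝ₊·Δ` over `Δ`. -/
def cone0 (Δ : Set (σ → ℝ)) : Set (σ → ℝ) :=
  {x | ∃ t : ℝ, 0 ≤ t ∧ ∃ y ∈ Δ, x = t • y}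

/-- The restriction of `f` obtained by setting the variables in `S` to zero. -/
noncomputable def restrictZero (S : Finset σ) (f : MvPolynomial σ ℂ) :
    MvPolynomial {j : σ // j ∉ S} ℂ :=
  aeval (fun j : σ => if h : j ∉ S then X (⟨j, h⟩ : {j : σ // j ∉ S}) else 0) f

end

end ToricNewton

/-!
The Rees algebra of the Newton filtration is, after rescaling degrees, the semigroup ring of the
lattice points of the cone over the Newton polytope, hence a normal affine semigroup ring. By the
Nullstellensatz a zero of the Rees parameter and of the homogenized toric derivatives other than the
origin lies in the torus orbit of a face of the Newton boundary, which nondegeneracy excludes; so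
these `n + 1` elements form a homogeneous system of parameters. They are a regular sequence in any
order by Hochster's theorem: reduction modulo `p` leads to positive characteristic, where colon
capturing places the colon ideals in tight closures, and the Cartier operators, which split
Frobenius, show that these are trivial.

Regularity with the Rees parameter in front means that the toric derivatives are a regular sequence
strictly compatible with the filtration. Each of them therefore turns the Hilbert series of the
quotient into its product with `1 - z`, starting from that of `ℬ`, which counts lattice points by
their Newton degree.
-/

namespace ToricNewton

/-! ### Permutable regular families and colon capturing -/

section PermutableRegular

/-- A family in a commutative ring such that each member is a nonzerodivisor modulo the ideal
generated by any finitely many other members; equivalently, every finite enumeration of it is a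
(weakly) regular sequence. -/
def IsPermutableRegular {R ι : Type*} [CommRing R] (θ : ι → R) : Prop :=
  ∀ (J : Finset ι) (i : ι), i ∉ J → ∀ x : R,
    x * θ i ∈ Ideal.span (θ '' J) → x ∈ Ideal.span (θ '' J)

lemma isPermutableRegular_X_pow {ι R : Type*} [CommRing R] (q : ℕ) :
    IsPermutableRegular fun i : ι => (X i ^ q : MvPolynomial ι R) := by
  intro J i hi x hx
  have himage : (fun j : ι => (X j ^ q : MvPolynomial ι R)) '' J =
      (fun s => monomial s 1) '' ((fun j => Finsupp.single j q) '' J) := by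
    simp only [Set.image_image, X_pow_eq_monomial]
  rw [himage, mem_ideal_span_monomial_image] at hx ⊢
  intro m hm
  have hmi : m + Finsupp.single i q ∈ (x * X i ^ q).support := by
    rw [mem_support_iff, X_pow_eq_monomial, coeff_mul_monomial, mul_one]
    exact mem_support_iff.1 hm
  obtain ⟨_, ⟨j, hj, rfl⟩, hle⟩ := hx _ hmi
  refine ⟨_, ⟨j, hj, rfl⟩, Finsupp.single_le_iff.2 ?_⟩
  have hji : j ≠ i := fun h => hi (h ▸ hj)
  simpa [hji] using hle j

lemma IsPermutableRegular.mem_smul_span {A M ι κ : Type*} [CommRing A] [AddCommGroup M]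
    [Module A M] {θ : ι → A} (hθ : IsPermutableRegular θ) {b : κ → M} (hb : LinearIndependent A b)
    {J : Finset ι} {i : ι} (hi : i ∉ J) {y : M} (hy : y ∈ Submodule.span A (Set.range b))
    (hyi : θ i • y ∈ Ideal.span (θ '' J) • Submodule.span A (Set.range b)) :
    y ∈ Ideal.span (θ '' J) • Submodule.span A (Set.range b) := by
  rw [Submodule.mem_ideal_smul_span_iff_exists_sum] at hyi ⊢
  obtain ⟨a, ha, hay⟩ := hyi
  obtain ⟨c, hc⟩ := Finsupp.mem_span_range_iff_exists_finsupp.1 hy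
  have hac : a = θ i • c := hb <| by
    rw [Finsupp.linearCombination_apply, hay, map_smul, Finsupp.linearCombination_apply, hc]
  refine ⟨c, fun k => hθ J i hi _ ?_, hc⟩
  have hak := ha k
  rwa [hac, Finsupp.smul_apply, smul_eq_mul, mul_comm] at hak

lemma exists_linearIndepOn_forall_smul_mem_span {A M : Type*} [CommRing A] [IsDomain A]
    [AddCommGroup M] [Module A M] [Module.Finite A M] :
    ∃ (c : A) (s : Set M), c ≠ 0 ∧ LinearIndepOn A id s ∧
      ∀ y : M, c • y ∈ Submodule.span A s := by
  classical
  obtain ⟨G, hG⟩ := (Module.Finite.fg_top : (⊤ : Submodule A M).FG)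
  obtain ⟨I, hI, hmax⟩ := exists_maximal_linearIndepOn A (fun g : G => (g : M))
  have htors : ∀ g : G, ∃ a : A, a ≠ 0 ∧ a • (g : M) ∈ Submodule.span A (Subtype.val '' I) := by
    intro g
    by_cases hg : g ∈ I
    · exact ⟨1, one_ne_zero, by
        rw [one_smul]; exact Submodule.subset_span (Set.mem_image_of_mem _ hg)⟩
    · exact hmax g hg
  choose a ha0 ha using htors
  refine ⟨∏ g, a g, Subtype.val '' I, Finset.prod_ne_zero_iff.2 fun g _ => ha0 g,
    hI.id_image, fun y => ?_⟩
  have hy : y ∈ Submodule.span A (G : Set M) := hG ▸ Submodule.mem_top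
  induction hy using Submodule.span_induction with
  | mem x hx =>
    rw [← Finset.prod_erase_mul _ _ (Finset.mem_univ ⟨x, hx⟩), mul_smul]
    exact Submodule.smul_mem _ _ (ha ⟨x, hx⟩)
  | zero => rw [smul_zero]; exact Submodule.zero_mem _
  | add x y _ _ hx hy => rw [smul_add]; exact Submodule.add_mem _ hx hy
  | smul t x _ hx => rw [smul_comm]; exact Submodule.smul_mem _ _ hx

lemma pow_char_pow_mem_span_image {R ι : Type*} [CommRing R] (p k : ℕ) [Fact p.Prime]
    [CharP R p] {θ : ι → R} {J : Set ι} {x : R} (hx : x ∈ Ideal.span (θ '' J)) :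
    x ^ p ^ k ∈ Ideal.span ((fun j => θ j ^ p ^ k) '' J) := by
  have hmap := Ideal.mem_map_of_mem (iterateFrobenius R p k) hx
  rwa [Ideal.map_span, Set.image_image, iterateFrobenius_def] at hmap

lemma exists_smul_mem_map_span_of_isPermutableRegular {A R : Type*} [CommRing A] [IsDomain A]
    [CommRing R] [Algebra A R] [Module.Finite A R] :
    ∃ c : A, c ≠ 0 ∧ ∀ {ι : Type*} {θ : ι → A}, IsPermutableRegular θ → ∀ (J : Finset ι) (i : ι),
      i ∉ J → ∀ y : R, θ i • y ∈ (Ideal.span (θ '' J)).map (algebraMap A R) →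
        c • y ∈ (Ideal.span (θ '' J)).map (algebraMap A R) := by
  obtain ⟨c, s, hc, hs, hspan⟩ := exists_linearIndepOn_forall_smul_mem_span (A := A) (M := R)
  refine ⟨c, hc, fun {ι θ} hθ J i hi y hy => ?_⟩
  set I := Ideal.span (θ '' J)
  have hmap : ∀ z : R, z ∈ I.map (algebraMap A R) ↔ z ∈ I • (⊤ : Submodule A R) := fun z => by
    rw [Ideal.smul_top_eq_map, Submodule.restrictScalars_mem]
  have hrange : Set.range ((↑) : s → R) = s := Subtype.range_coe
  have hle : ∀ z ∈ I • (⊤ : Submodule A R),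
      c • z ∈ I • Submodule.span A (Set.range ((↑) : s → R)) := fun z hz => by
    rw [hrange]
    induction hz using Submodule.smul_induction_on' with
    | smul a ha n _ => rw [smul_comm]; exact Submodule.smul_mem_smul ha (hspan n)
    | add x _ y _ hx hy => rw [smul_add]; exact Submodule.add_mem _ hx hy
  have hcolon : θ i • c • y ∈ I • Submodule.span A (Set.range ((↑) : s → R)) := by
    rw [smul_comm]
    exact hle _ ((hmap _).1 hy)
  rw [hmap]
  exact Submodule.smul_mono le_rfl le_top
    (hθ.mem_smul_span hs hi (hrange.symm ▸ hspan y) hcolon)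

/-- Colon capturing (Hochster–Huneke): the colon ideals of parameters lie in the tight closure
of the ideals they generate, with one multiplier `c` for all of them. -/
theorem exists_mul_pow_mem_span_of_finite_aeval {κ R ι : Type*} [Field κ] [CommRing R] [Algebra κ R]
    (p : ℕ) [Fact p.Prime] [CharP R p] {θ : ι → R} (hind : AlgebraicIndependent κ θ)
    (hfin : (aeval θ : MvPolynomial ι κ →ₐ[κ] R).Finite) :
    ∃ c : R, c ≠ 0 ∧ ∀ (J : Finset ι) (i : ι), i ∉ J → ∀ (k : ℕ) (x : R),
      x * θ i ∈ Ideal.span (θ '' J) → c * x ^ p ^ k ∈ Ideal.span ((fun j => θ j ^ p ^ k) '' J) := by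
  let _ : Algebra (MvPolynomial ι κ) R := (aeval θ : MvPolynomial ι κ →ₐ[κ] R).toRingHom.toAlgebra
  have hsmul : ∀ (P : MvPolynomial ι κ) (y : R), P • y = aeval θ P * y := fun _ _ => rfl
  have : Module.Finite (MvPolynomial ι κ) R := hfin
  obtain ⟨c, hc0, hc⟩ :=
    exists_smul_mem_map_span_of_isPermutableRegular (A := MvPolynomial ι κ) (R := R)
  refine ⟨aeval θ c, fun h => hc0 (hind (by simpa using h)), fun J i hi k x hx => ?_⟩
  have hmap : (Ideal.span ((fun j => X j ^ p ^ k) '' J)).map (algebraMap (MvPolynomial ι κ) R) =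
      Ideal.span ((fun j => θ j ^ p ^ k) '' J) := by
    rw [Ideal.map_span, Set.image_image]
    refine congrArg Ideal.span (Set.image_congr fun j _ => ?_)
    change aeval θ (X j ^ p ^ k) = _
    rw [map_pow, aeval_X]
  have hpow := pow_char_pow_mem_span_image p k hx
  rw [mul_pow, mul_comm, ← hmap] at hpow
  have hcx := hc (isPermutableRegular_X_pow (p ^ k)) J i hi (x ^ p ^ k) (by
    rwa [hsmul, map_pow, aeval_X])
  rwa [hmap, hsmul] at hcx

/-- Strong `F`-regularity: for every nonzero `c` some iterate of Frobenius, followed by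
multiplication by `c`, splits. The splitting is recorded as an additive map `ρ` which is
`p⁻ᵏ`-linear and sends `c` to `1`. -/
def IsStronglyFRegular (p : ℕ) (R : Type*) [CommRing R] : Prop :=
  ∀ c : R, c ≠ 0 → ∃ (k : ℕ) (ρ : R →+ R), (∀ a g, ρ (a ^ p ^ k * g) = a * ρ g) ∧ ρ c = 1

theorem IsStronglyFRegular.isPermutableRegular {κ R ι : Type*} [Field κ] [CommRing R]
    [Algebra κ R] {p : ℕ} [Fact p.Prime] [CharP R p] (hR : IsStronglyFRegular p R) {θ : ι → R}
    (hind : AlgebraicIndependent κ θ) (hfin : (aeval θ : MvPolynomial ι κ →ₐ[κ] R).Finite) :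
    IsPermutableRegular θ := by
  obtain ⟨c, hc0, hc⟩ := exists_mul_pow_mem_span_of_finite_aeval p hind hfin
  obtain ⟨k, ρ, hρ, hρc⟩ := hR c hc0
  intro J i hi x hx
  have hρx : ρ (x ^ p ^ k * c) = x := by rw [hρ, hρc, mul_one]
  rw [← hρx, mul_comm]
  have hcx := hc J i hi k x hx
  rw [Ideal.span, Submodule.mem_span_image_finset_iff_exists_fun] at hcx
  obtain ⟨r, hr⟩ := hcx
  rw [← hr, map_sum]
  refine Ideal.sum_mem _ fun j _ => ?_
  rw [smul_eq_mul, mul_comm, hρ]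
  exact Ideal.mul_mem_right _ _ (Ideal.subset_span (Set.mem_image_of_mem θ j.2))

end PermutableRegular

/-! ### Normal affine semigroup rings and their strong `F`-regularity -/

section ConeAlgebra

variable {τ : Type*}

/-- The monoid of lattice points of the cone cut out of the orthant `ℕ^τ` by the inequalities
`l ≥ 0` for `l ∈ Λ`. -/
def coneMonoid (Λ : Set (τ → ℤ)) : AddSubmonoid (τ →₀ ℕ) where
  carrier := {a | ∀ l ∈ Λ, 0 ≤ Finsupp.weight l a}
  zero_mem' l _ := (map_zero (Finsupp.weight l)).ge
  add_mem' ha hb l hl := by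
    rw [map_add]
    exact add_nonneg (ha l hl) (hb l hl)

lemma mem_coneMonoid {Λ : Set (τ → ℤ)} {a : τ →₀ ℕ} :
    a ∈ coneMonoid Λ ↔ ∀ l ∈ Λ, 0 ≤ Finsupp.weight l a := Iff.rfl

/-- The monoid algebra of a submonoid `M` of `ℕ^τ`, realized as the algebra of polynomials all of
whose exponents lie in `M`. -/
noncomputable def monoidSubalgebra (R : Type*) [CommSemiring R] (M : AddSubmonoid (τ →₀ ℕ)) :
    Subalgebra R (MvPolynomial τ R) :=
  (restrictSupport R (M : Set (τ →₀ ℕ))).toSubalgebra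
    ((monomial_mem_restrictSupport R).2 (Or.inl M.zero_mem)) fun g h hg hh => by
      classical
      rw [mem_restrictSupport_iff] at hg hh ⊢
      intro a ha
      obtain ⟨b, hb, c, hc, rfl⟩ := Finset.mem_add.1 (support_mul g h ha)
      exact M.add_mem (hg hb) (hh hc)

lemma mem_monoidSubalgebra {R : Type*} [CommSemiring R] {M : AddSubmonoid (τ →₀ ℕ)}
    {g : MvPolynomial τ R} : g ∈ monoidSubalgebra R M ↔ ∀ a ∈ g.support, a ∈ M :=
  mem_restrictSupport_iff R

lemma monomial_mem_monoidSubalgebra {R : Type*} [CommSemiring R] {M : AddSubmonoid (τ →₀ ℕ)}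
    {b : τ →₀ ℕ} (hb : b ∈ M) (c : R) : monomial b c ∈ monoidSubalgebra R M :=
  (monomial_mem_restrictSupport R).2 (Or.inl hb)

/-- The monomial with exponent `b ∈ M` as an element of the monoid algebra of `M`. -/
noncomputable def monoidMonomial (R : Type*) [CommSemiring R] {M : AddSubmonoid (τ →₀ ℕ)} (b : M) :
    monoidSubalgebra R M :=
  ⟨monomial (b : τ →₀ ℕ) 1, monomial_mem_monoidSubalgebra (M := M) b.2 1⟩

section Frobenius

variable {κ : Type*} [Field κ] (p k : ℕ) [Fact p.Prime] [CharP κ p] [PerfectRing κ p]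

/-- The Cartier operator on a polynomial ring over a perfect field which extracts the coefficients
at the exponents congruent to `m₀` modulo `pᵏ` and takes their `pᵏ`-th roots. -/
noncomputable def cartier (m₀ : τ →₀ ℕ) : MvPolynomial τ κ →+ MvPolynomial τ κ :=
  (map (iterateFrobeniusEquiv κ p k).symm.toRingHom).toAddMonoidHom.comp
    (AddMonoidAlgebra.comapDomainAddMonoidHom (fun b => m₀ + p ^ k • b)
      fun _ _ h => nsmul_right_injective (pow_ne_zero k (Fact.out : p.Prime).ne_zero)
        (add_left_cancel h))

@[simp]
lemma coeff_cartier (m₀ b : τ →₀ ℕ) (g : MvPolynomial τ κ) :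
    coeff b (cartier p k m₀ g) = (iterateFrobeniusEquiv κ p k).symm (coeff (m₀ + p ^ k • b) g) :=
  coeff_map _ _ _

lemma cartier_pow_mul {m₀ : τ →₀ ℕ} (hm₀ : ∀ i, m₀ i < p ^ k) (a g : MvPolynomial τ κ) :
    cartier p k m₀ (a ^ p ^ k * g) = a * cartier p k m₀ g := by
  induction a using MvPolynomial.induction_on' with
  | add a b ha hb => rw [add_pow_char_pow, add_mul, map_add, ha, hb, add_mul]
  | monomial m α =>
    ext b
    have hle : p ^ k • m ≤ m₀ + p ^ k • b ↔ m ≤ b := by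
      refine forall_congr' fun i => ?_
      simp only [Finsupp.smul_apply, smul_eq_mul, Finsupp.add_apply]
      refine ⟨fun h => ?_, fun h => (Nat.mul_le_mul_left _ h).trans (Nat.le_add_left _ _)⟩
      by_contra! hlt
      have := Nat.mul_le_mul_left (p ^ k) (Nat.succ_le_of_lt hlt)
      have := hm₀ i
      lia
    have hroot : (iterateFrobeniusEquiv κ p k).symm (α ^ p ^ k) = α := by
      rw [RingEquiv.symm_apply_eq, iterateFrobeniusEquiv_apply, iterateFrobenius_def]
    simp only [coeff_cartier, monomial_pow, coeff_monomial_mul', hle]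
    split_ifs with hmb
    · have hsub : m₀ + p ^ k • b - p ^ k • m = m₀ + p ^ k • (b - m) := by
        obtain ⟨c, rfl⟩ := exists_add_of_le hmb
        rw [add_tsub_cancel_left, smul_add, add_left_comm, add_tsub_cancel_left]
      rw [map_mul, hroot, hsub]
    · exact map_zero _

lemma cartier_mem_monoidSubalgebra {Λ : Set (τ → ℤ)} {m₀ : τ →₀ ℕ}
    (hΛ : ∀ l ∈ Λ, Finsupp.weight l m₀ < (p : ℤ) ^ k) {g : MvPolynomial τ κ}
    (hg : g ∈ monoidSubalgebra κ (coneMonoid Λ)) :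
    cartier p k m₀ g ∈ monoidSubalgebra κ (coneMonoid Λ) := by
  rw [mem_monoidSubalgebra] at hg ⊢
  intro b hb l hl
  rw [mem_support_iff, coeff_cartier, EmbeddingLike.map_ne_zero_iff, ← mem_support_iff] at hb
  have hmem := hg _ hb l hl
  rw [map_add, map_nsmul, nsmul_eq_mul, Nat.cast_pow] at hmem
  have := hΛ l hl
  by_contra! hneg
  have : (p : ℤ) ^ k * Finsupp.weight l b ≤ (p : ℤ) ^ k * (-1) :=
    mul_le_mul_of_nonneg_left (Int.le_sub_one_of_lt hneg) (by positivity)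
  lia

lemma cartier_eq_C {m₀ : τ →₀ ℕ} {c : MvPolynomial τ κ} (hc : c.totalDegree < p ^ k) :
    cartier p k m₀ c = C ((iterateFrobeniusEquiv κ p k).symm (coeff m₀ c)) := by
  classical
  ext b
  rw [coeff_cartier, coeff_C]
  split_ifs with hb
  · rw [← hb, smul_zero, add_zero]
  · rw [coeff_eq_zero_of_totalDegree_lt, map_zero]
    have hdeg : 1 ≤ b.degree :=
      Nat.one_le_iff_ne_zero.2 fun h => hb (b.degree_eq_zero_iff.1 h).symm
    change _ < (m₀ + p ^ k • b).degree
    rw [map_add, map_nsmul, smul_eq_mul]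
    nlinarith

end Frobenius

theorem isStronglyFRegular_monoidSubalgebra_coneMonoid {κ : Type*} [Field κ] (p : ℕ)
    [Fact p.Prime] [CharP κ p] [PerfectRing κ p] {Λ : Set (τ → ℤ)} (hΛ : Λ.Finite) :
    IsStronglyFRegular p (monoidSubalgebra κ (coneMonoid Λ)) := by
  intro c hc
  obtain ⟨m₀, hm₀⟩ := MvPolynomial.ne_zero_iff.1 (fun h => hc (Subtype.ext h))
  obtain ⟨B, hB⟩ := (hΛ.image fun l => Finsupp.weight l m₀).bddAbove
  obtain ⟨k, hk⟩ : ∃ k, (c : MvPolynomial τ κ).totalDegree + B.toNat < p ^ k :=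
    ⟨_, Nat.lt_pow_self (Fact.out : p.Prime).one_lt⟩
  have hdeg : (c : MvPolynomial τ κ).totalDegree < p ^ k := by lia
  have hcoord : ∀ i, m₀ i < p ^ k := fun i =>
    ((m₀.le_degree i).trans (le_totalDegree (mem_support_iff.2 hm₀))).trans_lt hdeg
  have hweight : ∀ l ∈ Λ, Finsupp.weight l m₀ < (p : ℤ) ^ k := fun l hl => by
    have := hB ⟨l, hl, rfl⟩
    zify at hk
    lia
  have hunit : (iterateFrobeniusEquiv κ p k).symm (coeff m₀ (c : MvPolynomial τ κ)) ≠ 0 :=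
    (EmbeddingLike.map_ne_zero_iff).2 hm₀
  set u := (iterateFrobeniusEquiv κ p k).symm (coeff m₀ (c : MvPolynomial τ κ))
  let ρ : monoidSubalgebra κ (coneMonoid Λ) →+ monoidSubalgebra κ (coneMonoid Λ) :=
    { toFun := fun g => u⁻¹ • ⟨cartier p k m₀ g, cartier_mem_monoidSubalgebra p k hweight g.2⟩
      map_zero' := by ext1; simp
      map_add' := fun g h => by ext1; simp }
  refine ⟨k, ρ, fun a g => Subtype.ext ?_, Subtype.ext ?_⟩
  · change u⁻¹ • cartier p k m₀ ((a : MvPolynomial τ κ) ^ p ^ k * (g : MvPolynomial τ κ)) =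
      (a : MvPolynomial τ κ) * u⁻¹ • cartier p k m₀ (g : MvPolynomial τ κ)
    rw [cartier_pow_mul p k hcoord, mul_smul_comm]
  · change u⁻¹ • cartier p k m₀ (c : MvPolynomial τ κ) = 1
    rw [cartier_eq_C p k hdeg, smul_eq_C_mul, ← C_mul, inv_mul_cancel₀ hunit, C_1]

end ConeAlgebra

/-! ### Graded systems of parameters of monoid algebras -/

section Graded

variable {τ ι A : Type*} [CommRing A] {M : AddSubmonoid (τ →₀ ℕ)}

@[simp]
lemma coe_monoidMonomial (b : M) :
    (monoidMonomial A b : MvPolynomial τ A) = monomial (b : τ →₀ ℕ) 1 := rfl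

lemma monoidMonomial_add (b c : M) :
    monoidMonomial A (b + c) = monoidMonomial A b * monoidMonomial A c := by
  ext1
  simp [monomial_mul]

lemma monoidMonomial_nsmul (n : ℕ) (b : M) :
    monoidMonomial A (n • b) = monoidMonomial A b ^ n := by
  ext1
  simp [monomial_pow]

lemma sum_coeff_smul_monoidMonomial (x : monoidSubalgebra A M) :
    ∑ b ∈ (x : MvPolynomial τ A).support.attach,
      coeff (b : τ →₀ ℕ) (x : MvPolynomial τ A) •
        monoidMonomial A ⟨b, mem_monoidSubalgebra.1 x.2 b b.2⟩ = x := by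
  ext1
  rw [AddSubmonoidClass.coe_finsetSum]
  conv_rhs => rw [(x : MvPolynomial τ A).as_sum, ← Finset.sum_attach]
  refine Finset.sum_congr rfl fun b _ => ?_
  rw [Subalgebra.coe_smul, coe_monoidMonomial, smul_monomial, smul_eq_mul, mul_one]

lemma linearMap_ext_monoidMonomial {N : Type*} [AddCommGroup N] [Module A N]
    {F G : monoidSubalgebra A M →ₗ[A] N}
    (h : ∀ b, F (monoidMonomial A b) = G (monoidMonomial A b)) : F = G := by
  ext y
  rw [← sum_coeff_smul_monoidMonomial y]
  simp only [map_sum, map_smul, h]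

/-- The homogeneous component of degree `s`, with respect to the weights `w` of the variables, of
an element of a monoid algebra. -/
noncomputable def monoidComponent (w : τ → ℕ) (s : ℕ) :
    monoidSubalgebra A M →ₗ[A] monoidSubalgebra A M :=
  (weightedHomogeneousComponent w s).restrict fun x hx => by
    classical
    change _ ∈ monoidSubalgebra A M at hx ⊢
    rw [mem_monoidSubalgebra] at hx ⊢
    intro a ha
    rw [support_weightedHomogeneousComponent, Finset.mem_filter] at ha
    exact hx a ha.1

@[simp]
lemma coe_monoidComponent (w : τ → ℕ) (s : ℕ) (x : monoidSubalgebra A M) :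
    (monoidComponent w s x : MvPolynomial τ A) =
      weightedHomogeneousComponent w s (x : MvPolynomial τ A) := rfl

lemma monoidComponent_eq_self {w : τ → ℕ} {s : ℕ} {x : monoidSubalgebra A M}
    (hx : IsWeightedHomogeneous w (x : MvPolynomial τ A) s) : monoidComponent w s x = x :=
  Subtype.ext (weightedHomogeneousComponent_of_mem hx |>.trans (if_pos rfl))

lemma monoidComponent_monoidMonomial (w : τ → ℕ) (s : ℕ) (b : M) :
    monoidComponent w s (monoidMonomial A b) =
      if Finsupp.weight w (b : τ →₀ ℕ) = s then monoidMonomial A b else 0 := by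
  ext1
  rw [coe_monoidComponent, coe_monoidMonomial,
    weightedHomogeneousComponent_of_mem (isWeightedHomogeneous_monomial w _ _ rfl)]
  split_ifs <;> simp_all

lemma weightedHomogeneousComponent_mul_of_isWeightedHomogeneous {w : τ → ℕ} {d : ℕ}
    {θ : MvPolynomial τ A} (hθ : IsWeightedHomogeneous w θ d) (s : ℕ) (a : MvPolynomial τ A) :
    weightedHomogeneousComponent w s (a * θ) =
      if d ≤ s then weightedHomogeneousComponent w (s - d) a * θ else 0 := by
  induction a using MvPolynomial.induction_on' with
  | add a b ha hb =>
    rw [add_mul, map_add, ha, hb, map_add]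
    split_ifs
    · rw [add_mul]
    · rw [add_zero]
  | monomial m c =>
    have hm := isWeightedHomogeneous_monomial w m c rfl
    rw [weightedHomogeneousComponent_of_mem (hm.mul hθ), weightedHomogeneousComponent_of_mem hm]
    split_ifs <;> first | rfl | lia

lemma exists_monoidComponent_eq_sum {w : τ → ℕ} {θ : ι → monoidSubalgebra A M} {d : ι → ℕ}
    (hθ : ∀ i, IsWeightedHomogeneous w (θ i : MvPolynomial τ A) (d i)) {J : Finset ι}
    {x : monoidSubalgebra A M} (hx : x ∈ Ideal.span (θ '' J)) (s : ℕ) :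
    ∃ r : ι → monoidSubalgebra A M,
      (∀ j, ∀ a ∈ (r j : MvPolynomial τ A).support, Finsupp.weight w a + d j = s) ∧
        monoidComponent w s x = ∑ j ∈ J, r j * θ j := by
  classical
  rw [Ideal.span, Submodule.mem_span_image_finset_iff_exists_fun'] at hx
  obtain ⟨r, rfl⟩ := hx
  refine ⟨fun j => if d j ≤ s then monoidComponent w (s - d j) (r j) else 0, fun j a ha => ?_, ?_⟩
  · dsimp only at ha
    split_ifs at ha with hj
    · rw [coe_monoidComponent, support_weightedHomogeneousComponent, Finset.mem_filter] at ha
      lia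
    · simp at ha
  · rw [map_sum]
    refine Finset.sum_congr rfl fun j _ => Subtype.ext ?_
    rw [coe_monoidComponent, smul_eq_mul, Subalgebra.coe_mul,
      weightedHomogeneousComponent_mul_of_isWeightedHomogeneous (hθ j)]
    dsimp only
    split_ifs <;> simp

lemma monoidComponent_mem_span {w : τ → ℕ} {θ : ι → monoidSubalgebra A M} {d : ι → ℕ}
    (hθ : ∀ i, IsWeightedHomogeneous w (θ i : MvPolynomial τ A) (d i)) {J : Finset ι}
    {x : monoidSubalgebra A M} (hx : x ∈ Ideal.span (θ '' J)) (s : ℕ) :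
    monoidComponent w s x ∈ Ideal.span (θ '' J) := by
  obtain ⟨r, -, hr⟩ := exists_monoidComponent_eq_sum hθ hx s
  rw [hr]
  exact Ideal.sum_mem _ fun j hj =>
    Ideal.mul_mem_left _ _ (Ideal.subset_span (Set.mem_image_of_mem θ hj))

lemma sum_monoidComponent (w : τ → ℕ) (x : monoidSubalgebra A M) :
    ∑ s ∈ (x : MvPolynomial τ A).support.image (Finsupp.weight w), monoidComponent w s x = x := by
  classical
  ext a
  simp only [AddSubmonoidClass.coe_finsetSum, coeff_sum, coe_monoidComponent,
    coeff_weightedHomogeneousComponent]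
  rw [Finset.sum_ite_eq]
  refine ite_eq_left_iff.2 fun ha => ?_
  by_contra h
  exact ha (Finset.mem_image_of_mem _ (mem_support_iff.2 (Ne.symm h)))

lemma isPermutableRegular_of_forall_isWeightedHomogeneous {w : τ → ℕ}
    {θ : ι → monoidSubalgebra A M} {d : ι → ℕ}
    (hθ : ∀ i, IsWeightedHomogeneous w (θ i : MvPolynomial τ A) (d i))
    (h : ∀ (J : Finset ι), ∀ i ∉ J, ∀ s, ∀ x : monoidSubalgebra A M,
      IsWeightedHomogeneous w (x : MvPolynomial τ A) s →
        x * θ i ∈ Ideal.span (θ '' J) → x ∈ Ideal.span (θ '' J)) : IsPermutableRegular θ := by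
  intro J i hi x hx
  have hcomp : ∀ s, monoidComponent w s x ∈ Ideal.span (θ '' J) := fun s => by
    refine h J i hi s _ (weightedHomogeneousComponent_isWeightedHomogeneous s _) ?_
    convert monoidComponent_mem_span hθ hx (s + d i)
    ext1
    simp [weightedHomogeneousComponent_mul_of_isWeightedHomogeneous (hθ i)]
  rw [← sum_monoidComponent w x]
  exact Ideal.sum_mem _ fun s _ => hcomp s

lemma mem_of_forall_monoidMonomial_mem {S : Submodule A (monoidSubalgebra A M)}
    {x : monoidSubalgebra A M}
    (h : ∀ b : M, (b : τ →₀ ℕ) ∈ (x : MvPolynomial τ A).support → monoidMonomial A b ∈ S) :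
    x ∈ S := by
  rw [← sum_coeff_smul_monoidMonomial x]
  exact Submodule.sum_mem _ fun b _ => S.smul_mem _ (h _ b.2)

/-- A graded Nakayama lemma. -/
lemma eq_top_of_forall_mul_mem [Finite ι] {w : τ → ℕ} {θ : ι → monoidSubalgebra A M} {d : ι → ℕ}
    (hθ : ∀ i, IsWeightedHomogeneous w (θ i : MvPolynomial τ A) (d i)) (hd : ∀ i, 0 < d i) {N : ℕ}
    (hN : ∀ b : M, N ≤ Finsupp.weight w (b : τ →₀ ℕ) →
      monoidMonomial A b ∈ Ideal.span (Set.range θ))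
    {S : Submodule A (monoidSubalgebra A M)} (hmul : ∀ i, ∀ x ∈ S, x * θ i ∈ S)
    (hS : ∀ b : M, Finsupp.weight w (b : τ →₀ ℕ) < N → monoidMonomial A b ∈ S) : S = ⊤ := by
  have := Fintype.ofFinite ι
  have hmono : ∀ n, ∀ b : M, Finsupp.weight w (b : τ →₀ ℕ) = n → monoidMonomial A b ∈ S := by
    intro n
    induction n using Nat.strong_induction_on with
    | _ n ih =>
      intro b hb
      by_cases hbN : Finsupp.weight w (b : τ →₀ ℕ) < N
      · exact hS b hbN
      have hspan := hN b (not_lt.1 hbN)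
      rw [← Set.image_univ, ← Finset.coe_univ] at hspan
      obtain ⟨r, hr, hbr⟩ := exists_monoidComponent_eq_sum hθ hspan n
      rw [monoidComponent_eq_self (isWeightedHomogeneous_monomial w _ _ hb)] at hbr
      rw [hbr]
      refine Submodule.sum_mem _ fun j _ =>
        hmul j _ (mem_of_forall_monoidMonomial_mem fun a ha => ?_)
      exact ih _ (by have := hr j _ ha; have := hd j; lia) a rfl
  exact eq_top_iff.2 fun y _ => mem_of_forall_monoidMonomial_mem fun b _ => hmono _ b rfl

theorem finite_aeval_of_monoidMonomial_mem_span [Finite ι] {w : τ → ℕ}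
    {θ : ι → monoidSubalgebra A M} {d : ι → ℕ}
    (hθ : ∀ i, IsWeightedHomogeneous w (θ i : MvPolynomial τ A) (d i)) (hd : ∀ i, 0 < d i) {N : ℕ}
    (hfin : {b : M | Finsupp.weight w (b : τ →₀ ℕ) < N}.Finite)
    (hN : ∀ b : M, N ≤ Finsupp.weight w (b : τ →₀ ℕ) →
      monoidMonomial A b ∈ Ideal.span (Set.range θ)) :
    (aeval θ : MvPolynomial ι A →ₐ[A] monoidSubalgebra A M).Finite := by
  let _ : Algebra (MvPolynomial ι A) (monoidSubalgebra A M) :=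
    (aeval θ : MvPolynomial ι A →ₐ[A] monoidSubalgebra A M).toRingHom.toAlgebra
  have : IsScalarTower A (MvPolynomial ι A) (monoidSubalgebra A M) :=
    IsScalarTower.of_algHom (aeval θ)
  change Module.Finite (MvPolynomial ι A) (monoidSubalgebra A M)
  let S := Submodule.span (MvPolynomial ι A)
    (monoidMonomial A '' {b : M | Finsupp.weight w (b : τ →₀ ℕ) < N})
  have hmul : ∀ i, ∀ x ∈ S, x * θ i ∈ S := fun i x hx => by
    have hXi : (X i : MvPolynomial ι A) • x = aeval θ (X i) * x := rfl
    rw [mul_comm, ← aeval_X (R := A) θ i, ← hXi]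
    exact S.smul_mem _ hx
  have htop : S = ⊤ := Submodule.restrictScalars_eq_top_iff A _ _ |>.1 <|
    eq_top_of_forall_mul_mem hθ hd hN (S := S.restrictScalars A) hmul
      fun b hb => Submodule.subset_span (Set.mem_image_of_mem _ hb)
  exact ⟨htop ▸ Submodule.fg_span (hfin.image _)⟩

end Graded

section PositiveCharacteristic

variable {τ κ : Type*} [Finite τ] [Field κ]

/-- A family of `#τ` elements over which a monoid algebra of full rank is integral is algebraically
independent, because `κ[M]` has transcendence degree `#τ`. -/
lemma algebraicIndependent_of_isIntegral_aeval {M : AddSubmonoid (τ →₀ ℕ)}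
    (hM : ∀ i, ∃ a ∈ M, a + Finsupp.single i 1 ∈ M) {θ : τ → monoidSubalgebra κ M}
    (hθ : (aeval θ : MvPolynomial τ κ →ₐ[κ] monoidSubalgebra κ M).toRingHom.IsIntegral) :
    AlgebraicIndependent κ θ := by
  set θ' : τ → MvPolynomial τ κ := fun i => (θ i : MvPolynomial τ κ)
  have hval : ∀ P : MvPolynomial τ κ, aeval θ' P = (aeval θ P : MvPolynomial τ κ) := fun P =>
    aeval_algebraMap_apply (MvPolynomial τ κ) θ P
  have hmono : ∀ b ∈ M,
      IsAlgebraic (Algebra.adjoin κ (Set.range θ')) (monomial b (1 : κ)) := fun b hb => by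
    let φ : MvPolynomial τ κ →+* Algebra.adjoin κ (Set.range θ') :=
      (aeval θ').toRingHom.codRestrict _ fun P => by
        rw [Algebra.adjoin_range_eq_range_aeval]
        exact ⟨P, rfl⟩
    let _ := (aeval θ : MvPolynomial τ κ →ₐ[κ] monoidSubalgebra κ M).toRingHom.toAlgebra
    have hb' : IsIntegral (MvPolynomial τ κ) (monoidMonomial κ ⟨b, hb⟩) := hθ _
    exact (hb'.map_of_comp_eq φ (monoidSubalgebra κ M).val.toRingHom
      (RingHom.ext hval)).isAlgebraic
  have hX : ∀ i, IsAlgebraic (Algebra.adjoin κ (Set.range θ')) (X i : MvPolynomial τ κ) := by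
    intro i
    obtain ⟨a, ha, hai⟩ := hM i
    refine IsAlgebraic.of_mul (y := monomial a (1 : κ)) ?_ (hmono a ha) ?_
    · simp [mem_nonZeroDivisors_iff_ne_zero]
    · rw [X, monomial_mul, one_mul]
      exact hmono _ hai
  have : Algebra.IsAlgebraic (Algebra.adjoin κ (Set.range θ')) (MvPolynomial τ κ) := by
    refine ⟨fun x => ?_⟩
    rw [← Subalgebra.mem_algebraicClosure]
    induction x using MvPolynomial.induction_on with
    | C a => exact (Subalgebra.algebraicClosure _ _).algebraMap_mem (algebraMap κ _ a)
    | add p q hp hq => exact add_mem hp hq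
    | mul_X p i hp => exact mul_mem hp (hX i)
  have hind : AlgebraicIndependent κ θ' :=
    (Algebra.IsAlgebraic.isTranscendenceBasis_of_lift_le_trdeg_of_finite κ θ' (by
      simp [MvPolynomial.trdeg_of_isDomain])).1
  exact AlgebraicIndependent.of_comp (monoidSubalgebra κ M).val hind

theorem isPermutableRegular_of_charP (p : ℕ) [Fact p.Prime] [CharP κ p] [PerfectRing κ p]
    {Λ : Set (τ → ℤ)} (hΛ : Λ.Finite)
    (hM : ∀ i, ∃ a ∈ coneMonoid Λ, a + Finsupp.single i 1 ∈ coneMonoid Λ) {w : τ → ℕ}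
    {θ : τ → monoidSubalgebra κ (coneMonoid Λ)} {d : τ → ℕ}
    (hθ : ∀ i, IsWeightedHomogeneous w (θ i : MvPolynomial τ κ) (d i)) (hd : ∀ i, 0 < d i) {N : ℕ}
    (hfin : {b : coneMonoid Λ | Finsupp.weight w (b : τ →₀ ℕ) < N}.Finite)
    (hN : ∀ b : coneMonoid Λ, N ≤ Finsupp.weight w (b : τ →₀ ℕ) →
      monoidMonomial κ b ∈ Ideal.span (Set.range θ)) :
    IsPermutableRegular θ := by
  have hfinite := finite_aeval_of_monoidMonomial_mem_span hθ hd hfin hN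
  have : CharP (monoidSubalgebra κ (coneMonoid Λ)) p :=
    charP_of_injective_algebraMap (algebraMap κ _).injective p
  exact (isStronglyFRegular_monoidSubalgebra_coneMonoid p hΛ).isPermutableRegular
    (algebraicIndependent_of_isIntegral_aeval hM hfinite.to_isIntegral) hfinite

end PositiveCharacteristic

/-! ### Finitely generated monoids and Gordan's lemma -/

section FinitelyGenerated

lemma exists_finset_forall_eq_sum_nsmul (M : Type*) [AddCommMonoid M] [AddMonoid.FG M] :
    ∃ G : Finset M, 0 ∉ G ∧ ∀ b : M, ∃ n : M → ℕ, b = ∑ g ∈ G, n g • g := by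
  classical
  obtain ⟨G, hG⟩ := AddMonoid.FG.fg_top (M := M)
  refine ⟨G.erase 0, Finset.notMem_erase 0 G, fun b => ?_⟩
  have hb : b ∈ AddSubmonoid.closure (G : Set M) := hG ▸ AddSubmonoid.mem_top b
  obtain ⟨n, -, rfl⟩ := AddSubmonoid.mem_closure_finset.1 hb
  exact ⟨n, (Finset.sum_erase (f := fun g => n g • g) G (smul_zero (n 0))).symm⟩

variable {M : Type*} [AddCommMonoid M] [AddMonoid.FG M]

lemma finite_setOf_degree_lt {deg : M →+ ℕ} (hdeg : ∀ b, b ≠ 0 → 0 < deg b) (N : ℕ) :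
    {b | deg b < N}.Finite := by
  classical
  obtain ⟨G, hG0, hG⟩ := exists_finset_forall_eq_sum_nsmul M
  refine ((Fintype.piFinset fun _ : G => Finset.range N).finite_toSet.image
    fun n => ∑ g : G, n g • (g : M)).subset fun b hb => ?_
  obtain ⟨n, rfl⟩ := hG b
  refine ⟨fun g => n g, ?_, Finset.sum_coe_sort G fun g => n g • g⟩
  simp only [Finset.mem_coe, Fintype.mem_piFinset, Finset.mem_range]
  intro g
  have hle : n g * deg g ≤ deg (∑ g ∈ G, n g • g) := by
    rw [map_sum]
    refine le_trans (le_of_eq ?_) (Finset.single_le_sum (fun _ _ => Nat.zero_le _) g.2)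
    rw [map_nsmul, smul_eq_mul]
  exact ((Nat.le_mul_of_pos_right _ (hdeg g fun h => hG0 (h ▸ g.2))).trans hle).trans_lt hb

lemma exists_eq_nsmul_add_of_le_degree (deg : M →+ ℕ) (k : M → ℕ) :
    ∃ (G : Finset M) (N : ℕ), 0 ∉ G ∧ ∀ b, N ≤ deg b → ∃ g ∈ G, ∃ b', b = k g • g + b' := by
  classical
  obtain ⟨G, hG0, hG⟩ := exists_finset_forall_eq_sum_nsmul M
  refine ⟨G, ∑ g ∈ G, k g * deg g + 1, hG0, fun b hb => ?_⟩
  obtain ⟨n, rfl⟩ := hG b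
  obtain ⟨g, hg, hkn⟩ : ∃ g ∈ G, k g ≤ n g := by
    by_contra! hlt
    refine (Nat.lt_of_succ_le hb).not_ge ?_
    simp only [map_sum, map_nsmul, smul_eq_mul]
    exact Finset.sum_le_sum fun g hg => Nat.mul_le_mul_right _ (hlt g hg).le
  refine ⟨g, hg, (n g - k g) • g + ∑ h ∈ G.erase g, n h • h, ?_⟩
  rw [← add_assoc, ← add_nsmul, Nat.add_sub_cancel' hkn,
    Finset.add_sum_erase G (fun h => n h • h) hg]

/-- Gordan's lemma. Recording the values of the inequalities as slack variables turns the cone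
monoid into the locus where two homomorphisms from some `ℕᵏ` agree. -/
lemma coneMonoid_fg {τ : Type*} [Finite τ] {Λ : Set (τ → ℤ)} (hΛ : Λ.Finite) :
    (coneMonoid Λ).FG := by
  have := hΛ.to_subtype
  let value : (τ →₀ ℕ) × (Λ → ℕ) →+ (Λ → ℤ) :=
    (AddMonoidHom.pi fun l : Λ => Finsupp.weight (l : τ → ℤ)).comp (AddMonoidHom.fst _ _)
  let slack : (τ →₀ ℕ) × (Λ → ℕ) →+ (Λ → ℤ) :=
    ((Nat.castAddMonoidHom ℤ).compLeft Λ).comp (AddMonoidHom.snd _ _)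
  have hmap : coneMonoid Λ = (value.eqLocusM slack).map (AddMonoidHom.fst _ _) := by
    ext a
    constructor
    · intro ha
      exact ⟨(a, fun l => (Finsupp.weight (l : τ → ℤ) a).toNat),
        funext fun l => (Int.toNat_of_nonneg (ha l l.2)).symm, rfl⟩
    · rintro ⟨⟨a, c⟩, hac, rfl⟩ l hl
      exact (Int.natCast_nonneg (c ⟨l, hl⟩)).trans_eq (congrFun hac ⟨l, hl⟩).symm
  rw [hmap]
  exact (AddSubmonoid.fg_eqLocusM value slack).map _

end FinitelyGenerated

/-! ### Reduction modulo `p` -/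

section Reduction

universe u

lemma isJacobsonRing_int : IsJacobsonRing ℤ := by
  rw [isJacobsonRing_iff_prime_eq]
  intro P hP
  by_cases h : P = ⊥
  · subst h
    rw [eq_bot_iff]
    intro x hx
    have hunit := Int.isUnit_iff.1 (Ideal.mem_jacobson_bot.1 hx x)
    rw [Ideal.mem_bot, ← mul_self_eq_zero]
    rcases hunit with h | h
    · lia
    · nlinarith [mul_self_nonneg x]
  · have : P.IsMaximal := hP.isMaximal h
    exact Ideal.jacobson_eq_self_of_isMaximal

lemma exists_ringHom_perfectRing (D : Type u) [CommRing D] [Nontrivial D]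
    [Algebra.FiniteType ℤ D] :
    ∃ (p : ℕ) (_ : Fact p.Prime) (κ : Type u) (_ : Field κ) (_ : CharP κ p) (_ : PerfectRing κ p),
      Nonempty (D →+* κ) := by
  obtain ⟨m, hm⟩ := Ideal.exists_maximal D
  let _ := Ideal.Quotient.field m
  have := isJacobsonRing_int
  have hfin : Module.Finite ℤ (D ⧸ m) := finite_of_finite_type_of_isJacobsonRing ℤ _
  obtain ⟨p, hp⟩ := CharP.exists (D ⧸ m)
  have hp0 : p ≠ 0 := by
    rintro rfl
    have := CharP.charP_to_charZero (D ⧸ m)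
    exact Int.not_isField (isField_of_isIntegral_of_isField
      (algebraMap ℤ (D ⧸ m)).injective_int (Field.toIsField _))
  have : Fact p.Prime := ⟨(CharP.char_is_prime_or_zero (D ⧸ m) p).resolve_right hp0⟩
  have : CharP (AlgebraicClosure (D ⧸ m)) p :=
    charP_of_injective_algebraMap (algebraMap (D ⧸ m) _).injective p
  exact ⟨p, inferInstance, AlgebraicClosure (D ⧸ m), inferInstance, inferInstance, inferInstance,
    ⟨(algebraMap (D ⧸ m) _).comp (Ideal.Quotient.mk m)⟩⟩

variable {τ ι A B : Type*} [CommRing A] [CommRing B] {M : AddSubmonoid (τ →₀ ℕ)}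

/-- The base change of monoid algebras along a homomorphism of coefficient rings. -/
noncomputable def monoidMap (M : AddSubmonoid (τ →₀ ℕ)) (φ : A →+* B) :
    monoidSubalgebra A M →+* monoidSubalgebra B M :=
  (map φ).restrict (monoidSubalgebra A M) (monoidSubalgebra B M) fun x hx => by
    rw [mem_monoidSubalgebra] at hx ⊢
    exact fun a ha => hx a (support_map_subset φ x ha)

@[simp]
lemma coe_monoidMap (φ : A →+* B) (x : monoidSubalgebra A M) :
    (monoidMap M φ x : MvPolynomial τ B) = map φ (x : MvPolynomial τ A) := rfl

lemma monoidMap_injective {φ : A →+* B} (hφ : Function.Injective φ) :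
    Function.Injective (monoidMap M φ) := fun _ _ h =>
  Subtype.ext (map_injective φ hφ (congrArg Subtype.val h))

lemma monoidMap_monoidMonomial (φ : A →+* B) (b : M) :
    monoidMap M φ (monoidMonomial A b) = monoidMonomial B b := by
  ext1
  simp

lemma monoidMap_mem_span {φ : A →+* B} {θ : ι → monoidSubalgebra A M} {J : Set ι}
    {x : monoidSubalgebra A M} (hx : x ∈ Ideal.span (θ '' J)) :
    monoidMap M φ x ∈ Ideal.span ((fun j => monoidMap M φ (θ j)) '' J) := by
  have := Ideal.mem_map_of_mem (monoidMap M φ) hx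
  rwa [Ideal.map_span, Set.image_image] at this

lemma mem_range_monoidMap {D : Subalgebra ℤ A} {x : monoidSubalgebra A M}
    (hx : ((x : MvPolynomial τ A).coeffs : Set A) ⊆ D) :
    x ∈ Set.range (monoidMap M (algebraMap D A)) := by
  have hlift : (x : MvPolynomial τ A) ∈ Set.range (map (algebraMap D A)) := by
    rw [mem_range_map_iff_coeffs_subset]
    exact fun c hc => ⟨⟨c, hx hc⟩, rfl⟩
  obtain ⟨y, hy⟩ := hlift
  refine ⟨⟨y, mem_monoidSubalgebra.2 fun a ha => mem_monoidSubalgebra.1 x.2 a ?_⟩,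
    Subtype.ext hy⟩
  rwa [← hy, support_map_of_injective _ Subtype.val_injective]

lemma exists_finite_forall_mem_span {θ : ι → monoidSubalgebra A M} {J : Finset ι}
    {x : monoidSubalgebra A M} (hx : x ∈ Ideal.span (θ '' J)) :
    ∃ T : Set A, T.Finite ∧ ∀ D : Subalgebra ℤ A, T ⊆ D →
      ∀ (θ' : ι → monoidSubalgebra D M) (x' : monoidSubalgebra D M),
        (∀ j, monoidMap M (algebraMap D A) (θ' j) = θ j) →
        monoidMap M (algebraMap D A) x' = x → x' ∈ Ideal.span (θ' '' J) := by
  rw [Ideal.span, Submodule.mem_span_image_finset_iff_exists_fun'] at hx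
  obtain ⟨r, hr⟩ := hx
  refine ⟨⋃ j ∈ J, (r j : MvPolynomial τ A).coeffs,
    J.finite_toSet.biUnion fun j _ => Finset.finite_toSet _, fun D hD θ' x' hθ' hx' => ?_⟩
  have hlift : ∀ j ∈ J, ∃ r', monoidMap M (algebraMap D A) r' = r j := fun j hj =>
    mem_range_monoidMap ((Set.subset_biUnion_of_mem (u := fun j =>
      ((r j : MvPolynomial τ A).coeffs : Set A)) hj).trans hD)
  choose! r' hr' using hlift
  have hx'' : x' = ∑ j ∈ J, r' j * θ' j := by
    apply monoidMap_injective (φ := algebraMap D A) Subtype.val_injective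
    rw [hx', ← hr, map_sum]
    exact Finset.sum_congr rfl fun j hj => by rw [map_mul, hr' j hj, hθ', smul_eq_mul]
  rw [hx'']
  exact Ideal.sum_mem _ fun j hj =>
    Ideal.mul_mem_left _ _ (Ideal.subset_span (Set.mem_image_of_mem θ' hj))

lemma exists_subalgebra_forall_mem_span [Finite ι] (θ : ι → monoidSubalgebra A M)
    {Y : Set (monoidSubalgebra A M)} (hY : Y.Finite) :
    ∃ D : Subalgebra ℤ A, Algebra.FiniteType ℤ D ∧
      Y ⊆ Set.range (monoidMap M (algebraMap D A)) ∧
      ∃ θ' : ι → monoidSubalgebra D M, (∀ j, monoidMap M (algebraMap D A) (θ' j) = θ j) ∧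
        ∀ (J : Finset ι) (y : monoidSubalgebra D M), monoidMap M (algebraMap D A) y ∈ Y →
          monoidMap M (algebraMap D A) y ∈ Ideal.span (θ '' J) → y ∈ Ideal.span (θ' '' J) := by
  choose! T hT hspan using fun (y : monoidSubalgebra A M) (J : Finset ι)
    (hy : y ∈ Ideal.span (θ '' J)) => exists_finite_forall_mem_span hy
  let S : Set A := (⋃ j, (θ j : MvPolynomial τ A).coeffs) ∪
    ⋃ y ∈ Y, ((y : MvPolynomial τ A).coeffs ∪ ⋃ J ∈ {J : Finset ι | y ∈ Ideal.span (θ '' J)}, T y J)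
  have hS : S.Finite := (Set.finite_iUnion fun j => Finset.finite_toSet _).union <|
    hY.biUnion fun y _ => (Finset.finite_toSet _).union <|
      (Set.toFinite _).biUnion fun J hJ => hT y J hJ
  have hSθ : ∀ j, ((θ j : MvPolynomial τ A).coeffs : Set A) ⊆ S := fun j =>
    (Set.subset_iUnion (fun j => ((θ j : MvPolynomial τ A).coeffs : Set A)) j).trans
      Set.subset_union_left
  have hSY : ∀ y ∈ Y, ((y : MvPolynomial τ A).coeffs : Set A) ∪
      ⋃ J ∈ {J : Finset ι | y ∈ Ideal.span (θ '' J)}, T y J ⊆ S := fun y hy =>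
    (Set.subset_biUnion_of_mem (u := fun y : monoidSubalgebra A M =>
      ((y : MvPolynomial τ A).coeffs : Set A) ∪
        ⋃ J ∈ {J : Finset ι | y ∈ Ideal.span (θ '' J)}, T y J) hy).trans Set.subset_union_right
  have hSD : S ⊆ Algebra.adjoin ℤ S := Algebra.subset_adjoin
  choose θ' hθ' using fun j => mem_range_monoidMap ((hSθ j).trans hSD)
  refine ⟨Algebra.adjoin ℤ S, Algebra.FiniteType.adjoin_of_finite hS, fun y hy =>
    mem_range_monoidMap ((Set.subset_union_left.trans (hSY y hy)).trans hSD), θ', hθ',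
    fun J y hy hyJ => hspan _ J hyJ _ ?_ θ' y hθ' rfl⟩
  exact (((Set.subset_biUnion_of_mem (u := T (monoidMap M (algebraMap _ A) y)) hyJ).trans
    Set.subset_union_right).trans (hSY _ hy)).trans hSD

lemma isWeightedHomogeneous_map {w : τ → ℕ} {s : ℕ} {x : MvPolynomial τ A} (φ : A →+* B)
    (hx : IsWeightedHomogeneous w x s) : IsWeightedHomogeneous w (map φ x) s := fun a ha =>
  hx fun h => ha (by rw [coeff_map, h, map_zero])

lemma isWeightedHomogeneous_of_map {w : τ → ℕ} {s : ℕ} {x : MvPolynomial τ A} {φ : A →+* B}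
    (hφ : Function.Injective φ) (hx : IsWeightedHomogeneous w (map φ x) s) :
    IsWeightedHomogeneous w x s := fun a ha =>
  hx (by rwa [coeff_map, map_ne_zero_iff φ hφ])

end Reduction

section Descent

variable {τ ι : Type*} {M : AddSubmonoid (τ →₀ ℕ)}

/-- The pairing `⟨l, x⟩ = ∑ lₐ xₐ` of the coefficients of two polynomials, used to encode linear
functionals on polynomials by polynomials. -/
noncomputable def coeffPairing {A : Type*} [CommRing A] (l : MvPolynomial τ A) :
    MvPolynomial τ A →ₗ[A] A :=
  (basisMonomials τ A).constr A fun a => coeff a l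

lemma coeffPairing_monomial_one {A : Type*} [CommRing A] (l : MvPolynomial τ A) (a : τ →₀ ℕ) :
    coeffPairing l (monomial a 1) = coeff a l := by
  simpa only [coe_basisMonomials, coeffPairing] using
    (basisMonomials τ A).constr_basis A (fun a => coeff a l) a

lemma coeffPairing_monomial {A : Type*} [CommRing A] (l : MvPolynomial τ A) (a : τ →₀ ℕ) (c : A) :
    coeffPairing l (monomial a c) = c * coeff a l := by
  rw [← mul_one c, ← smul_eq_mul, ← smul_monomial, map_smul, coeffPairing_monomial_one,
    smul_eq_mul, smul_eq_mul, mul_one]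

lemma coeffPairing_map {A B : Type*} [CommRing A] [CommRing B] (φ : A →+* B)
    (l x : MvPolynomial τ A) : coeffPairing (map φ l) (map φ x) = φ (coeffPairing l x) := by
  induction x using MvPolynomial.induction_on' with
  | monomial a c => simp only [map_monomial, coeffPairing_monomial, coeff_map, map_mul]
  | add x y hx hy => simp only [map_add, hx, hy]

lemma coeffPairing_eq_zero_of_mem_span {A : Type*} [CommRing A] {l : MvPolynomial τ A}
    {θ : ι → monoidSubalgebra A M} {J : Finset ι}
    (hl : ∀ b : M, ∀ j ∈ J, coeffPairing l (monoidMonomial A b * θ j : monoidSubalgebra A M) = 0)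
    {x : monoidSubalgebra A M} (hx : x ∈ Ideal.span (θ '' J)) :
    coeffPairing l (x : MvPolynomial τ A) = 0 := by
  rw [Ideal.span, Submodule.mem_span_image_finset_iff_exists_fun'] at hx
  obtain ⟨r, rfl⟩ := hx
  rw [AddSubmonoidClass.coe_finsetSum, map_sum]
  refine Finset.sum_eq_zero fun j hj => ?_
  rw [smul_eq_mul, ← sum_coeff_smul_monoidMonomial (r j), Finset.sum_mul,
    AddSubmonoidClass.coe_finsetSum, map_sum]
  refine Finset.sum_eq_zero fun b _ => ?_
  rw [smul_mul_assoc, Subalgebra.coe_smul, map_smul, hl _ j hj, smul_zero]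

lemma coeffPairing_monoidMap_eq_zero {A B C : Type*} [CommRing A] [CommRing B] [CommRing C]
    {φ : A →+* B} (hφ : Function.Injective φ) (χ : A →+* C) {l : monoidSubalgebra A M}
    {θ : ι → monoidSubalgebra A M} {J : Finset ι}
    (hl : ∀ x ∈ Ideal.span ((fun j => monoidMap M φ (θ j)) '' J),
      coeffPairing (monoidMap M φ l : MvPolynomial τ B) (x : MvPolynomial τ B) = 0)
    {x : monoidSubalgebra C M} (hx : x ∈ Ideal.span ((fun j => monoidMap M χ (θ j)) '' J)) :
    coeffPairing (monoidMap M χ l : MvPolynomial τ C) (x : MvPolynomial τ C) = 0 := by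
  refine coeffPairing_eq_zero_of_mem_span (fun b j hj => ?_) hx
  have hmem : monoidMap M φ (monoidMonomial A b * θ j) ∈
      Ideal.span ((fun j => monoidMap M φ (θ j)) '' J) := by
    rw [map_mul]
    exact Ideal.mul_mem_left _ _ (Ideal.subset_span ⟨j, hj, rfl⟩)
  have hzero := hl _ hmem
  rw [coe_monoidMap, coe_monoidMap, coeffPairing_map, map_eq_zero_iff φ hφ] at hzero
  rw [← monoidMap_monoidMonomial χ, ← map_mul, coe_monoidMap, coe_monoidMap, coeffPairing_map,
    hzero, map_zero]

lemma exists_coeffPairing_eq_one {K : Type*} [Field K] {w : τ → ℕ}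
    {θ : ι → monoidSubalgebra K M} {d : ι → ℕ}
    (hθ : ∀ i, IsWeightedHomogeneous w (θ i : MvPolynomial τ K) (d i)) {J : Finset ι} {s : ℕ}
    (hfin : {b : M | Finsupp.weight w (b : τ →₀ ℕ) = s}.Finite) {x : monoidSubalgebra K M}
    (hxs : IsWeightedHomogeneous w (x : MvPolynomial τ K) s) (hx : x ∉ Ideal.span (θ '' J)) :
    ∃ l : monoidSubalgebra K M, coeffPairing (l : MvPolynomial τ K) (x : MvPolynomial τ K) = 1 ∧
      ∀ y ∈ Ideal.span (θ '' J),
        coeffPairing (l : MvPolynomial τ K) (y : MvPolynomial τ K) = 0 := by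
  classical
  obtain ⟨F, hFx, hF⟩ := Submodule.exists_le_ker_of_notMem
    (p := (Ideal.span (θ '' J)).restrictScalars K) hx
  let l := ∑ b ∈ hfin.toFinset, ((F x)⁻¹ * F (monoidMonomial K b)) • monoidMonomial K b
  have hl : ∀ y : monoidSubalgebra K M, coeffPairing (l : MvPolynomial τ K) (y : MvPolynomial τ K) =
      (F x)⁻¹ * F (monoidComponent w s y) := fun y => by
    suffices (coeffPairing (l : MvPolynomial τ K)).comp (monoidSubalgebra K M).val.toLinearMap =
        (F x)⁻¹ • F.comp (monoidComponent w s) from LinearMap.congr_fun this y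
    refine linearMap_ext_monoidMonomial fun b => ?_
    have hb := coeffPairing_monomial_one (l : MvPolynomial τ K) (b : τ →₀ ℕ)
    rw [LinearMap.comp_apply, LinearMap.smul_apply, LinearMap.comp_apply,
      monoidComponent_monoidMonomial]
    refine hb.trans ?_
    simp only [l, AddSubmonoidClass.coe_finsetSum, coeff_sum, Subalgebra.coe_smul, coeff_smul,
      coe_monoidMonomial, coeff_monomial, Subtype.coe_inj, smul_eq_mul, mul_ite, mul_one, mul_zero,
      Finset.sum_ite_eq', Set.Finite.mem_toFinset, Set.mem_ofPred_eq]
    split_ifs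
    · rfl
    · rw [map_zero, mul_zero]
  refine ⟨l, ?_, fun y hy => ?_⟩
  · rw [hl, monoidComponent_eq_self hxs, inv_mul_cancel₀ hFx]
  · rw [hl, LinearMap.mem_ker.1 (hF (monoidComponent_mem_span hθ hy s)), mul_zero]

end Descent

section Regularity

variable {τ K : Type*} [Field K]

lemma exists_monoidMonomial_mem_of_mem_radical {A : Type*} [CommRing A] {M : AddSubmonoid (τ →₀ ℕ)}
    (hM : M.FG) {w : τ → ℕ} {I : Ideal (monoidSubalgebra A M)}
    (hI : ∀ b : M, b ≠ 0 → monoidMonomial A b ∈ I.radical) :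
    ∃ (Z : Finset M) (N : ℕ), (∀ z ∈ Z, monoidMonomial A z ∈ I) ∧
      ∀ b : M, N ≤ Finsupp.weight w (b : τ →₀ ℕ) → ∃ z ∈ Z, ∃ b', b = z + b' := by
  classical
  have : AddMonoid.FG M := (AddMonoid.fg_iff_addSubmonoid_fg M).2 hM
  choose! k hk using hI
  obtain ⟨G, N, hG0, hG⟩ := exists_eq_nsmul_add_of_le_degree ((Finsupp.weight w).comp M.subtype) k
  refine ⟨G.image fun g => k g • g, N, fun z hz => ?_, fun b hb => ?_⟩
  · obtain ⟨g, hg, rfl⟩ := Finset.mem_image.1 hz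
    rw [monoidMonomial_nsmul]
    exact hk g fun h => hG0 (h ▸ hg)
  · obtain ⟨g, hg, b', hb'⟩ := hG b hb
    exact ⟨_, Finset.mem_image_of_mem _ hg, b', hb'⟩

variable [Finite τ]

lemma isPermutableRegular_monoidMap {A κ : Type*} [CommRing A] [Field κ] (p : ℕ) [Fact p.Prime]
    [CharP κ p] [PerfectRing κ p] {Λ : Set (τ → ℤ)} (hΛ : Λ.Finite)
    (hM : ∀ i, ∃ a ∈ coneMonoid Λ, a + Finsupp.single i 1 ∈ coneMonoid Λ) {w : τ → ℕ}
    (hfin : ∀ N, {b : coneMonoid Λ | Finsupp.weight w (b : τ →₀ ℕ) < N}.Finite)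
    {θ : τ → monoidSubalgebra A (coneMonoid Λ)} {d : τ → ℕ}
    (hθ : ∀ i, IsWeightedHomogeneous w (θ i : MvPolynomial τ A) (d i)) (hd : ∀ i, 0 < d i)
    (χ : A →+* κ) {Z : Finset (coneMonoid Λ)} {N : ℕ}
    (hZ : ∀ z ∈ Z, monoidMonomial A z ∈ Ideal.span (Set.range θ))
    (hN : ∀ b : coneMonoid Λ, N ≤ Finsupp.weight w (b : τ →₀ ℕ) → ∃ z ∈ Z, ∃ b', b = z + b') :
    IsPermutableRegular fun i => monoidMap (coneMonoid Λ) χ (θ i) := by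
  cases nonempty_fintype τ
  refine isPermutableRegular_of_charP p hΛ hM (fun i => isWeightedHomogeneous_map χ (hθ i)) hd
    (hfin N) fun b hb => ?_
  obtain ⟨z, hz, b', rfl⟩ := hN b hb
  rw [monoidMonomial_add, ← monoidMap_monoidMonomial χ z]
  refine Ideal.mul_mem_right _ _ ?_
  have hz' := hZ z hz
  rw [← Set.image_univ, ← Finset.coe_univ] at hz' ⊢
  exact monoidMap_mem_span hz'

/-- Let `x θᵢ ∈ (θⱼ : j ∈ J)` with `x` outside this ideal, as detected by a linear functional `l`
with `l x = 1`. All this is defined over a finitely generated ring, and survives in a residue field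
of positive characteristic, where it contradicts `isPermutableRegular_of_charP`. -/
lemma mem_span_of_mul_mem_span {Λ : Set (τ → ℤ)} (hΛ : Λ.Finite)
    (hM : ∀ i, ∃ a ∈ coneMonoid Λ, a + Finsupp.single i 1 ∈ coneMonoid Λ) {w : τ → ℕ}
    (hfin : ∀ N, {b : coneMonoid Λ | Finsupp.weight w (b : τ →₀ ℕ) < N}.Finite)
    {θ : τ → monoidSubalgebra K (coneMonoid Λ)} {d : τ → ℕ}
    (hθ : ∀ i, IsWeightedHomogeneous w (θ i : MvPolynomial τ K) (d i)) (hd : ∀ i, 0 < d i)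
    (hrad : ∀ b : coneMonoid Λ, b ≠ 0 →
      monoidMonomial K b ∈ (Ideal.span (Set.range θ)).radical)
    {J : Finset τ} {i : τ} (hi : i ∉ J) {s : ℕ} {x : monoidSubalgebra K (coneMonoid Λ)}
    (hxs : IsWeightedHomogeneous w (x : MvPolynomial τ K) s)
    (hx : x * θ i ∈ Ideal.span (θ '' J)) : x ∈ Ideal.span (θ '' J) := by
  classical
  cases nonempty_fintype τ
  by_contra hxJ
  obtain ⟨l, hlx, hl⟩ := exists_coeffPairing_eq_one hθ
    ((hfin (s + 1)).subset fun b hb => Nat.lt_succ_of_le (le_of_eq hb)) hxs hxJ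
  obtain ⟨Z, N, hZ, hN⟩ := exists_monoidMonomial_mem_of_mem_radical (coneMonoid_fg hΛ) (w := w) hrad
  obtain ⟨D, _, hD, θ', hθ', hspan⟩ := exists_subalgebra_forall_mem_span θ
    (Y := {x, l, x * θ i} ∪ monoidMonomial K '' Z) ((Set.toFinite _).union (Z.finite_toSet.image _))
  obtain ⟨x', rfl⟩ := hD (Or.inl (Or.inl rfl))
  obtain ⟨l', rfl⟩ := hD (Or.inl (Or.inr (Or.inl rfl)))
  have hinj : Function.Injective (algebraMap D K) := Subtype.val_injective
  obtain ⟨p, _, κ, _, _, _, ⟨χ⟩⟩ := exists_ringHom_perfectRing D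
  have hreg : IsPermutableRegular fun j => monoidMap (coneMonoid Λ) χ (θ' j) := by
    refine isPermutableRegular_monoidMap p hΛ hM hfin (fun j => ?_) hd χ (fun z hz => ?_) hN
    · have hj := hθ j
      rw [← hθ' j, coe_monoidMap] at hj
      exact isWeightedHomogeneous_of_map hinj hj
    · rw [← Set.image_univ, ← Finset.coe_univ]
      refine hspan _ _ (Or.inr ⟨z, hz, (monoidMap_monoidMonomial _ z).symm⟩) ?_
      rw [monoidMap_monoidMonomial, Finset.coe_univ, Set.image_univ]
      exact hZ z hz
  have hx' : x' * θ' i ∈ Ideal.span (θ' '' J) := by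
    apply hspan <;> rw [map_mul, hθ']
    · exact Or.inl (Or.inr (Or.inr rfl))
    · exact hx
  have hχx := hreg J i hi (monoidMap _ χ x') <| by
    rw [← map_mul]
    exact monoidMap_mem_span hx'
  have hzero := coeffPairing_monoidMap_eq_zero hinj χ (l := l') (θ := θ') (J := J)
    (by rwa [funext hθ']) hχx
  have hone : coeffPairing (l' : MvPolynomial τ D) (x' : MvPolynomial τ D) = 1 := hinj <| by
    rw [← coeffPairing_map, map_one]
    exact hlx
  rw [coe_monoidMap, coe_monoidMap, coeffPairing_map, hone, map_one] at hzero
  exact one_ne_zero hzero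

/-- Normal affine semigroup rings are Cohen–Macaulay (Hochster): homogeneous elements of positive
degree, as many as the dimension, which generate an ideal primary to the irrelevant ideal form a
regular sequence in any order. -/
theorem isPermutableRegular_of_monoidMonomial_mem_radical {Λ : Set (τ → ℤ)} (hΛ : Λ.Finite)
    (hM : ∀ i, ∃ a ∈ coneMonoid Λ, a + Finsupp.single i 1 ∈ coneMonoid Λ) {w : τ → ℕ}
    (hw : ∀ b ∈ coneMonoid Λ, b ≠ 0 → 0 < Finsupp.weight w b)
    {θ : τ → monoidSubalgebra K (coneMonoid Λ)} {d : τ → ℕ}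
    (hθ : ∀ i, IsWeightedHomogeneous w (θ i : MvPolynomial τ K) (d i)) (hd : ∀ i, 0 < d i)
    (hrad : ∀ b : coneMonoid Λ, b ≠ 0 →
      monoidMonomial K b ∈ (Ideal.span (Set.range θ)).radical) :
    IsPermutableRegular θ := by
  have : AddMonoid.FG (coneMonoid Λ) := (AddMonoid.fg_iff_addSubmonoid_fg _).2 (coneMonoid_fg hΛ)
  have hfin := finite_setOf_degree_lt (deg := (Finsupp.weight w).comp (coneMonoid Λ).subtype)
    fun b hb => hw b b.2 (by simpa using hb)
  exact isPermutableRegular_of_forall_isWeightedHomogeneous hθ fun J i hi s x hxs hx =>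
    mem_span_of_mul_mem_span hΛ hM hfin hθ hd hrad hi hxs hx

end Regularity

/-! ### Finitely generated cones and the Newton function -/

section Weyl

variable {ι τ : Type*}

/-- The closure of the generators `g i`, `i ∈ s`, under nonnegative linear combinations. -/
def conicSpan (𝕜 : Type*) [Field 𝕜] [LinearOrder 𝕜] (s : Finset ι)
    (g : ι → τ → ℤ) : Set (τ → 𝕜) :=
  {x | ∃ c : ι → 𝕜, (∀ i ∈ s, 0 ≤ c i) ∧ ∀ j, x j = ∑ i ∈ s, c i * g i j}

variable {𝕜 : Type*} [Field 𝕜] [LinearOrder 𝕜]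

lemma mem_conicSpan_insert [DecidableEq ι] {s : Finset ι} {i : ι} (hi : i ∉ s)
    {g : ι → τ → ℤ} {x : τ → 𝕜} :
    x ∈ conicSpan 𝕜 (insert i s) g ↔
      ∃ t, 0 ≤ t ∧ (fun j => x j - t * g i j) ∈ conicSpan 𝕜 s g := by
  constructor
  · rintro ⟨c, hc, hx⟩
    refine ⟨c i, hc i (Finset.mem_insert_self i s), c,
      fun k hk => hc k (Finset.mem_insert_of_mem hk), fun j => ?_⟩
    simp only [hx, Finset.sum_insert hi, add_sub_cancel_left]
  · rintro ⟨t, ht, c, hc, hx⟩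
    have hne : ∀ k ∈ s, k ≠ i := fun k hk h => hi (h ▸ hk)
    refine ⟨Function.update c i t, fun k hk => ?_, fun j => ?_⟩
    · rcases Finset.mem_insert.1 hk with rfl | hk
      · simpa only [Function.update_self] using ht
      · simpa only [Function.update_of_ne (hne k hk)] using hc k hk
    · rw [Finset.sum_insert hi, Function.update_self, ← sub_eq_iff_eq_add']
      refine (hx j).trans ?_
      exact Finset.sum_congr rfl fun k hk => by rw [Function.update_of_ne (hne k hk)]

variable [IsStrictOrderedRing 𝕜]

lemma exists_nonneg_forall_mul_le_iff (s : Finset ι) (p q : ι → 𝕜) :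
    (∃ t, 0 ≤ t ∧ ∀ i ∈ s, t * p i ≤ q i) ↔
      (∀ i ∈ s, 0 ≤ p i → 0 ≤ q i) ∧
        ∀ i ∈ s, ∀ j ∈ s, 0 ≤ p i → p j ≤ 0 → 0 ≤ p i * q j - p j * q i := by
  constructor
  · rintro ⟨t, ht, h⟩
    refine ⟨fun i hi hpi => (mul_nonneg ht hpi).trans (h i hi), fun i hi j hj hpi hpj => ?_⟩
    nlinarith [h i hi, h j hj]
  · rintro ⟨hq, hpq⟩
    let lower : Finset 𝕜 := insert 0 ({j ∈ s | p j < 0}.image fun j => q j / p j)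
    have hlower : lower.Nonempty := Finset.insert_nonempty _ _
    refine ⟨lower.max' hlower, lower.le_max' 0 (Finset.mem_insert_self _ _), fun i hi => ?_⟩
    rcases lt_trichotomy (p i) 0 with hpi | hpi | hpi
    · rw [← div_le_iff_of_neg hpi]
      exact lower.le_max' _ (Finset.mem_insert_of_mem
        (Finset.mem_image_of_mem _ (Finset.mem_filter.2 ⟨hi, hpi⟩)))
    · rw [hpi, mul_zero]
      exact hq i hi hpi.ge
    · rw [← le_div_iff₀ hpi]
      refine lower.max'_le hlower _ fun t ht => ?_
      rcases Finset.mem_insert.1 ht with rfl | ht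
      · exact div_nonneg (hq i hi hpi.le) hpi.le
      · obtain ⟨j, hj, rfl⟩ := Finset.mem_image.1 ht
        obtain ⟨hj, hpj⟩ := Finset.mem_filter.1 hj
        rw [le_div_iff₀ hpi, div_mul_eq_mul_div, div_le_iff_of_neg hpj]
        linarith [hpq i hi j hj hpi.le hpj.le]

/-- Weyl's theorem, proved by Fourier–Motzkin elimination of one generator after the other. -/
theorem exists_finset_mem_conicSpan_iff [Fintype τ] (s : Finset ι)
    (g : ι → τ → ℤ) :
    ∃ Λ : Finset (τ → ℤ), ∀ x : τ → 𝕜,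
      x ∈ conicSpan 𝕜 s g ↔ ∀ l ∈ Λ, 0 ≤ ∑ j, (l j : 𝕜) * x j := by
  classical
  induction s using Finset.induction_on with
  | empty =>
    refine ⟨Finset.univ.image (fun j => Pi.single j 1) ∪
      Finset.univ.image (fun j => Pi.single j (-1)), fun x => ?_⟩
    simp only [conicSpan, Finset.notMem_empty, Finset.sum_empty, le_antisymm_iff, forall_and,
      Finset.forall_mem_union, Finset.forall_mem_image, Finset.mem_univ, Pi.single_apply,
      Int.cast_ite, ite_mul, Set.mem_ofPred_eq]
    simp [and_comm]
  | insert i s hi ih =>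
    obtain ⟨Λ, hΛ⟩ := ih
    let p : (τ → ℤ) → ℤ := fun l => ∑ j, l j * g i j
    refine ⟨{l ∈ Λ | 0 ≤ p l} ∪
      (({l ∈ Λ | 0 ≤ p l} ×ˢ {l ∈ Λ | p l ≤ 0}).image fun l => p l.1 • l.2 - p l.2 • l.1),
      fun x => ?_⟩
    have heval : ∀ (l : τ → ℤ) (t : 𝕜), (0 ≤ ∑ j, (l j : 𝕜) * (x j - t * g i j)) ↔
        t * p l ≤ ∑ j, (l j : 𝕜) * x j := fun l t => by
      rw [← sub_nonneg (b := t * _)]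
      simp only [p, mul_sub, Finset.sum_sub_distrib, Int.cast_sum, Int.cast_mul, Finset.mul_sum,
        mul_left_comm]
    simp only [mem_conicSpan_insert hi, hΛ, heval]
    rw [exists_nonneg_forall_mul_le_iff]
    have hcomb : ∀ l l' : τ → ℤ, ∑ j, ((p l • l' - p l' • l) j : 𝕜) * x j =
        p l * ∑ j, (l' j : 𝕜) * x j - p l' * ∑ j, (l j : 𝕜) * x j := fun l l' => by
      simp only [Pi.sub_apply, Pi.smul_apply, smul_eq_mul, Int.cast_sub, Int.cast_mul, sub_mul,
        mul_assoc, Finset.sum_sub_distrib, Finset.mul_sum]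
    simp only [Finset.forall_mem_union, Finset.forall_mem_image, Finset.mem_product,
      Finset.mem_filter, Prod.forall, hcomb, Int.cast_nonneg_iff, Int.cast_nonpos]
    grind

end Weyl

section NewtonPolytope

variable {σ : Type*} {f : MvPolynomial σ ℂ}

lemma toR_injective : Function.Injective (toR : (σ →₀ ℕ) → σ → ℝ) := fun _ _ h =>
  Finsupp.ext fun i => Nat.cast_injective (congr_fun h i)

open Classical in
/-- The lattice points `{0} ∪ supp f` whose convex hull is the Newton polytope of `f`. -/
noncomputable def newtonPoints (f : MvPolynomial σ ℂ) : Finset (σ →₀ ℕ) :=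
  insert 0 f.support

lemma zero_mem_newtonPoints : 0 ∈ newtonPoints f := by
  classical exact Finset.mem_insert_self _ _

lemma mem_newtonPoints_of_mem_support {v : σ →₀ ℕ} (hv : v ∈ f.support) : v ∈ newtonPoints f := by
  classical exact Finset.mem_insert_of_mem hv

lemma newtonPolytope_eq_convexHull_image :
    newtonPolytope f = convexHull ℝ (toR '' (newtonPoints f : Set (σ →₀ ℕ))) := by
  classical
  have hzero : toR (0 : σ →₀ ℕ) = 0 := funext fun _ => Nat.cast_zero
  rw [newtonPolytope, newtonPoints, Finset.coe_insert, Set.image_insert_eq, hzero,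
    Set.singleton_union]

lemma toR_mem_newtonPolytope {v : σ →₀ ℕ} (hv : v ∈ newtonPoints f) : toR v ∈ newtonPolytope f :=
  newtonPolytope_eq_convexHull_image ▸ subset_convexHull ℝ _ (Set.mem_image_of_mem _ hv)

/-- The cone over the Newton polytope placed at height `1` in the coordinate `none`. -/
noncomputable def newtonCone (f : MvPolynomial σ ℂ) : Set (Option σ → ℝ) :=
  conicSpan ℝ (newtonPoints f) fun v j => (j.elim 1 v : ℕ)

lemma elim_mem_newtonCone {x : σ → ℝ} {t : ℝ} :
    (fun j => j.elim t x) ∈ newtonCone f ↔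
      ∃ c : (σ →₀ ℕ) → ℝ, (∀ v ∈ newtonPoints f, 0 ≤ c v) ∧ ∑ v ∈ newtonPoints f, c v = t ∧
        ∑ v ∈ newtonPoints f, c v • toR v = x := by
  refine exists_congr fun c => and_congr_right fun _ => ?_
  simp [Option.forall, funext_iff, toR, Finset.sum_apply, eq_comm]

open scoped Pointwise in
lemma mem_smul_newtonPolytope_iff {x : σ → ℝ} {t : ℝ} (ht : 0 < t) :
    x ∈ t • newtonPolytope f ↔ (fun j : Option σ => j.elim t x) ∈ newtonCone f := by
  classical
  rw [elim_mem_newtonCone, newtonPolytope_eq_convexHull_image]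
  constructor
  · rintro ⟨y, hy, rfl⟩
    rw [← Finset.coe_image, Finset.mem_convexHull'] at hy
    obtain ⟨w, hw, hsum, rfl⟩ := hy
    rw [Finset.sum_image toR_injective.injOn] at hsum
    refine ⟨fun v => t * w (toR v),
      fun v hv => mul_nonneg ht.le (hw _ (Finset.mem_image_of_mem _ hv)), ?_, ?_⟩
    · rw [← Finset.mul_sum, hsum, mul_one]
    · simp only [Finset.sum_image toR_injective.injOn, Finset.smul_sum, mul_smul]
  · rintro ⟨c, hc, rfl, rfl⟩
    refine ⟨_, (newtonPoints f).centerMass_mem_convexHull hc ht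
      fun v hv => Set.mem_image_of_mem toR hv, ?_⟩
    rw [Finset.centerMass]
    exact smul_inv_smul₀ ht.ne' _

lemma elim_mem_newtonCone_of_le {x : σ → ℝ} {s t : ℝ} (hst : s ≤ t)
    (hx : (fun j : Option σ => j.elim s x) ∈ newtonCone f) :
    (fun j : Option σ => j.elim t x) ∈ newtonCone f := by
  classical
  obtain ⟨c, hc, hs, hx⟩ := elim_mem_newtonCone.1 hx
  refine elim_mem_newtonCone.2 ⟨c + Pi.single 0 (t - s), fun v hv => ?_, ?_, ?_⟩
  · exact add_nonneg (hc v hv) (Pi.single_nonneg (α := fun _ => ℝ).2 (sub_nonneg.2 hst) v)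
  · simp [Finset.sum_add_distrib, hs, zero_mem_newtonPoints]
  · have hzero : toR (0 : σ →₀ ℕ) = 0 := funext fun _ => Nat.cast_zero
    simp [add_smul, Finset.sum_add_distrib, hx, Pi.single_apply, ite_smul, hzero]

lemma Convenient.exists_mem_newtonCone (hf : Convenient f) (m : σ →₀ ℕ) :
    ∃ t : ℝ, 0 < t ∧ (fun j => j.elim t (toR m)) ∈ newtonCone f := by
  classical
  suffices ∃ t : ℝ, (fun j => j.elim t (toR m)) ∈ newtonCone f by
    obtain ⟨t, ht⟩ := this
    exact ⟨max t 1, zero_lt_one.trans_le (le_max_right t 1),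
      elim_mem_newtonCone_of_le (le_max_left t 1) ht⟩
  simp only [elim_mem_newtonCone]
  induction m using Finsupp.induction_linear with
  | zero => exact ⟨0, 0, by simp [funext_iff, toR]⟩
  | add m₁ m₂ h₁ h₂ =>
    obtain ⟨t₁, c₁, hc₁, rfl, h₁⟩ := h₁
    obtain ⟨t₂, c₂, hc₂, rfl, h₂⟩ := h₂
    refine ⟨_, c₁ + c₂, fun v hv => add_nonneg (hc₁ v hv) (hc₂ v hv), rfl, ?_⟩
    simp only [Pi.add_apply, add_smul, Finset.sum_add_distrib, h₁, h₂]
    exact funext fun i => (Nat.cast_add (m₁ i) (m₂ i)).symm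
  | single i n =>
    obtain ⟨k, hk, hfk⟩ := hf i
    have hk' : (k : ℝ) ≠ 0 := Nat.cast_ne_zero.2 (Nat.one_le_iff_ne_zero.1 hk)
    have hv : Finsupp.single i k ∈ newtonPoints f :=
      mem_newtonPoints_of_mem_support (mem_support_iff.2 hfk)
    refine ⟨_, Pi.single (Finsupp.single i k) (n / k : ℝ), fun v _ =>
      Pi.single_nonneg (α := fun _ => ℝ).2 (by positivity) v, rfl, funext fun j => ?_⟩
    simp only [Pi.single_apply, ite_smul, zero_smul, Finset.sum_ite_eq', hv, if_true, Pi.smul_apply,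
      toR, Finsupp.single_apply, smul_eq_mul]
    split_ifs <;> simp [hk']

lemma nu_nonneg (m : σ →₀ ℕ) : 0 ≤ nu f (toR m) := gauge_nonneg _

lemma isClosed_newtonCone [Finite σ] : IsClosed (newtonCone f) := by
  cases nonempty_fintype σ
  obtain ⟨Λ, hΛ⟩ := exists_finset_mem_conicSpan_iff (𝕜 := ℝ) (newtonPoints f)
    fun v (j : Option σ) => (j.elim 1 v : ℕ)
  have hcone : newtonCone f = ⋂ l ∈ Λ, {x | 0 ≤ ∑ j, (l j : ℝ) * x j} := by
    ext x
    rw [Set.mem_iInter₂]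
    exact hΛ x
  rw [hcone]
  exact isClosed_biInter fun l _ => isClosed_le continuous_const (by fun_prop)

open scoped Pointwise in
lemma Convenient.nu_le_iff [Finite σ] (hf : Convenient f) {m : σ →₀ ℕ} {t : ℝ} (ht : 0 ≤ t) :
    nu f (toR m) ≤ t ↔ (fun j => j.elim t (toR m)) ∈ newtonCone f := by
  let c : Set ℝ := {s | (fun j : Option σ => j.elim s (toR m)) ∈ newtonCone f}
  have hc : IsClosed c := isClosed_newtonCone.preimage <|
    continuous_pi fun j => by cases j <;> simp only [Option.elim] <;> fun_prop
  constructor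
  · intro h
    suffices Set.Ioi t ⊆ c from (closure_Ioi t ▸ hc.closure_subset_iff.2 this) Set.self_mem_Ici
    intro s hs
    obtain ⟨r₀, hr₀, hm⟩ := hf.exists_mem_newtonCone m
    obtain ⟨r, ⟨hr, hmr⟩, hrs⟩ := exists_lt_of_csInf_lt
      (s := {r : ℝ | 0 < r ∧ toR m ∈ r • newtonPolytope f})
      ⟨r₀, hr₀, (mem_smul_newtonPolytope_iff hr₀).2 hm⟩ (h.trans_lt hs)
    exact elim_mem_newtonCone_of_le hrs.le ((mem_smul_newtonPolytope_iff hr).1 hmr)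
  · refine fun h => le_of_forall_gt_imp_ge_of_dense fun s hs => ?_
    have hs₀ : 0 < s := ht.trans_lt hs
    exact gauge_le_of_mem hs₀.le
      ((mem_smul_newtonPolytope_iff hs₀).2 (elim_mem_newtonCone_of_le hs.le h))

lemma Convenient.exists_nu_le_iff [Fintype σ] (hf : Convenient f) :
    ∃ L : Finset (Option σ → ℤ), (∀ l ∈ L, 0 ≤ l none) ∧
      ∀ (m : σ →₀ ℕ) (t : ℝ), 0 ≤ t →
        (nu f (toR m) ≤ t ↔ ∀ l ∈ L, 0 ≤ l none * t + ∑ i, (l (some i) : ℝ) * m i) := by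
  obtain ⟨L, hL⟩ := exists_finset_mem_conicSpan_iff (𝕜 := ℝ) (newtonPoints f)
    fun v (j : Option σ) => (j.elim 1 v : ℕ)
  simp only [Fintype.sum_option] at hL
  refine ⟨L, fun l hl => ?_, fun m t ht => ?_⟩
  · have h : nu f (toR (0 : σ →₀ ℕ)) ≤ 1 :=
      gauge_le_one_of_mem (toR_mem_newtonPolytope zero_mem_newtonPoints)
    have := (hL _).1 ((hf.nu_le_iff zero_le_one).1 h) l hl
    simpa [toR] using this
  · exact (hf.nu_le_iff ht).trans (hL _)

lemma mul_floor_add_nonneg {a b : ℤ} (ha : 0 < a) (hab : a ∣ b) {x : ℝ} (hx : 0 ≤ x)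
    (h : 0 ≤ a * x + b) : 0 ≤ (a * ⌊x⌋₊ + b : ℝ) := by
  obtain ⟨q, rfl⟩ := hab
  have ha' : (0 : ℝ) < a := Int.cast_pos.2 ha
  rw [Int.cast_mul, ← mul_add, mul_nonneg_iff_of_pos_left ha'] at h ⊢
  have hq : -q ≤ ⌊x⌋ := Int.le_floor.2 (by push_cast; linarith)
  rw [← Int.natCast_floor_eq_floor hx] at hq
  have : (0 : ℝ) ≤ ((⌊x⌋₊ + q : ℤ) : ℝ) := Int.cast_nonneg (by linarith)
  exact_mod_cast this

lemma Convenient.exists_mul_nu_le_iff [Fintype σ] (hf : Convenient f) :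
    ∃ (e : ℕ) (L : Finset (Option σ → ℤ)), 0 < e ∧
      (∀ l ∈ L, l none = 0 ∨ 0 < l none ∧ l none ∣ e) ∧
      ∀ (m : σ →₀ ℕ) (t : ℝ), 0 ≤ t → (e * nu f (toR m) ≤ t ↔
        ∀ l ∈ L, 0 ≤ l none * t + (e * ∑ i, l (some i) * m i : ℤ)) := by
  obtain ⟨L, hL₀, hL⟩ := hf.exists_nu_le_iff
  let e : ℕ := ∏ l ∈ L with 0 < l none, (l none).natAbs
  have he : 0 < e := Finset.prod_pos fun l hl => Int.natAbs_pos.2 (Finset.mem_filter.1 hl).2.ne'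
  have heR : (0 : ℝ) < e := Nat.cast_pos.2 he
  refine ⟨e, L, he, fun l hl => (hL₀ l hl).eq_or_lt.imp Eq.symm fun hl₀ => ⟨hl₀, ?_⟩,
    fun m t ht => ?_⟩
  · exact Int.dvd_natAbs_self.trans (Int.natCast_dvd_natCast.2
      (Finset.dvd_prod_of_mem (fun l : Option σ → ℤ => (l none).natAbs)
        (Finset.mem_filter.2 ⟨hl, hl₀⟩)))
  · rw [← le_div_iff₀' heR, hL m _ (div_nonneg ht heR.le)]
    refine forall₂_congr fun l _ => ?_
    rw [← mul_nonneg_iff_of_pos_left heR, mul_add, mul_left_comm, mul_div_cancel₀ _ heR.ne']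
    norm_cast

/-- Clearing the denominators of the facets makes the Newton function integral. -/
lemma Convenient.exists_mem_coneMonoid_iff [Finite σ] (hf : Convenient f) :
    ∃ (e : ℕ) (Λ : Set (Option σ → ℤ)) (N : (σ →₀ ℕ) → ℕ), 0 < e ∧ Λ.Finite ∧
      (∀ m, (N m : ℝ) = e * nu f (toR m)) ∧
        ∀ a : Option σ →₀ ℕ, a ∈ coneMonoid Λ ↔ N a.some ≤ a none := by
  cases nonempty_fintype σ
  obtain ⟨e, L, he, hL, hle⟩ := hf.exists_mul_nu_le_iff
  have hfloor : ∀ m, (⌊e * nu f (toR m)⌋₊ : ℝ) = e * nu f (toR m) := fun m => by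
    have hν : 0 ≤ e * nu f (toR m) := mul_nonneg (Nat.cast_nonneg e) (nu_nonneg m)
    refine (Nat.floor_le hν).antisymm ((hle m _ (Nat.cast_nonneg _)).2 fun l hl => ?_)
    have hlν := (hle m _ hν).1 le_rfl l hl
    rcases hL l hl with hl₀ | ⟨hl₀, hdvd⟩
    · rwa [hl₀, Int.cast_zero, zero_mul] at hlν ⊢
    · exact mul_floor_add_nonneg hl₀ (hdvd.mul_right _) hν hlν
  refine ⟨e, (fun (l : Option σ → ℤ) j => j.elim (l none) fun i => e * l (some i)) '' L, _, he,
    L.finite_toSet.image _, hfloor, fun a => ?_⟩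
  rw [← Nat.cast_le (α := ℝ), hfloor, hle _ _ (Nat.cast_nonneg _), mem_coneMonoid,
    Set.forall_mem_image]
  refine forall₂_congr fun l _ => ?_
  rw [Finsupp.weight_eq_sum, Fintype.sum_option, ← Int.cast_nonneg_iff (R := ℝ)]
  simp only [Option.elim, nsmul_eq_mul, Finsupp.some_apply, Finset.mul_sum]
  push_cast
  simp only [mul_comm, mul_assoc]

end NewtonPolytope

/-- Integral data describing the Newton filtration of `f`: after multiplication by a common
denominator `e`, the Newton function takes natural numbers `N m` as values, and the cone over
`e` times the Newton polytope is cut out by finitely many integral inequalities `l ≥ 0`, `l ∈ Λ`.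
The height is the coordinate `none`. -/
structure NewtonData {σ : Type*} (f : MvPolynomial σ ℂ) where
  e : ℕ
  e_pos : 0 < e
  N : (σ →₀ ℕ) → ℕ
  coe_N (m : σ →₀ ℕ) : (N m : ℝ) = e * nu f (toR m)
  Λ : Set (Option σ → ℤ)
  finite_Λ : Λ.Finite
  mem_iff {a : Option σ →₀ ℕ} : a ∈ coneMonoid Λ ↔ N a.some ≤ a none
  exists_eq_sum {a : Option σ →₀ ℕ} : a ∈ coneMonoid Λ →
    ∃ c : (σ →₀ ℕ) → ℝ, (∀ v ∈ newtonPoints f, 0 ≤ c v) ∧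
      ∀ j, (a j : ℝ) = ∑ v ∈ newtonPoints f, c v * v.optionElim e j

lemma Convenient.nonempty_newtonData {σ : Type*} [Finite σ] {f : MvPolynomial σ ℂ}
    (hf : Convenient f) : Nonempty (NewtonData f) := by
  obtain ⟨e, Λ, N, he, hΛ, hN, hmem⟩ := hf.exists_mem_coneMonoid_iff
  refine ⟨⟨e, he, N, hN, Λ, hΛ, hmem _, fun {a} ha => ?_⟩⟩
  have heR : (0 : ℝ) < e := Nat.cast_pos.2 he
  have hν : nu f (toR a.some) ≤ a none / e := by
    rw [le_div_iff₀' heR, ← hN]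
    exact_mod_cast (hmem a).1 ha
  obtain ⟨c, hc, hnone, hsome⟩ := elim_mem_newtonCone.1 ((hf.nu_le_iff (by positivity)).1 hν)
  refine ⟨c, hc, fun j => ?_⟩
  cases j with
  | none =>
    rw [eq_div_iff heR.ne'] at hnone
    simp [← hnone, Finset.sum_mul]
  | some i => simpa [toR] using (congr_fun hsome i).symm

/-! ### Characters of monoid algebras -/

section Character

lemma exists_algHom_apply_ne_zero (K : Type*) [Field K] [IsAlgClosed K] {R : Type*} [CommRing R]
    [Algebra K R] [Algebra.FiniteType K R] {I : Ideal R} {y : R} (hy : y ∉ I.radical) :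
    ∃ χ : R →ₐ[K] K, (∀ a ∈ I, χ a = 0) ∧ χ y ≠ 0 := by
  have : IsJacobsonRing R := isJacobsonRing_of_finiteType (A := K)
  rw [Ideal.radical_eq_jacobson, Ideal.jacobson, Submodule.mem_sInf] at hy
  push Not at hy
  obtain ⟨m, ⟨hIm, hm⟩, hym⟩ := hy
  let _ := Ideal.Quotient.field m
  have : Module.Finite K (R ⧸ m) := finite_of_finite_type_of_isJacobsonRing K (R ⧸ m)
  let E : K ≃ₐ[K] R ⧸ m := AlgEquiv.ofBijective (Algebra.ofId K (R ⧸ m))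
    IsAlgClosed.algebraMap_bijective_of_isIntegral
  have hE : ∀ x, E.symm (Ideal.Quotient.mkₐ K m x) = 0 ↔ x ∈ m := fun x => by
    rw [map_eq_zero_iff _ E.symm.injective]
    exact Ideal.Quotient.eq_zero_iff_mem
  exact ⟨E.symm.toAlgHom.comp (Ideal.Quotient.mkₐ K m), fun a ha => (hE a).2 (hIm ha),
    fun h => hym ((hE y).1 h)⟩

lemma exists_addMonoidHom_comp_eq {S A D : Type*} [AddCommMonoid S] [AddCommGroup A]
    [AddCommGroup D] (hD : Module.Baer ℤ D) {ι : S →+ A} (hι : Function.Injective ι) (u : S →+ D) :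
    ∃ h : A →+ D, h.comp ι = u := by
  let S' := Algebra.GrothendieckAddGroup S
  have hinj : Function.Injective (Algebra.GrothendieckAddGroup.lift ι : S' →+ A) := by
    refine (injective_iff_map_eq_zero _).2 fun x hx => ?_
    rw [Algebra.GrothendieckAddGroup.lift_apply, sub_eq_zero] at hx
    rw [← AddSubmonoid.LocalizationMap.mk'_sec (AddLocalization.addMonoidOf ⊤) x, hι hx,
      AddSubmonoid.LocalizationMap.mk'_self']
  obtain ⟨h, hh⟩ := hD.extension_property_addMonoidHom _ hinj
    (Algebra.GrothendieckAddGroup.lift u)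
  refine ⟨h, Algebra.GrothendieckAddGroup.lift.injective ?_⟩
  rw [← hh, ← Equiv.eq_symm_apply, Algebra.GrothendieckAddGroup.lift_symm_apply,
    AddMonoidHom.comp_assoc, ← Algebra.GrothendieckAddGroup.lift_symm_apply,
    Equiv.symm_apply_apply]

lemma baer_additive_units (K : Type*) [Field K] [IsAlgClosed K] :
    Module.Baer ℤ (Additive Kˣ) := by
  let _ : DivisibleBy (Additive Kˣ) ℕ := divisibleByOfSMulRightSurj _ _ fun {n} hn u => by
    obtain ⟨z, hz⟩ := IsAlgClosed.exists_pow_nat_eq (u.toMul : K) (Nat.pos_of_ne_zero hn)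
    have hz₀ : IsUnit z := (isUnit_pow_iff hn).1 (hz ▸ u.toMul.isUnit)
    exact ⟨.ofMul hz₀.unit, Additive.toMul.injective (Units.ext hz)⟩
  let _ : DivisibleBy (Additive Kˣ) ℤ := AddGroup.divisibleByIntOfDivisibleByNat _
  exact Module.Baer.of_divisible _

/-- The character need only be nonzero on `S`: its values there extend to the group generated by
`S`, and then to all exponents since `Kˣ` is divisible. -/
lemma exists_units_eq_prod_pow {K : Type*} [Field K] [IsAlgClosed K] {τ : Type*} [Fintype τ]
    {S : AddSubmonoid (τ →₀ ℕ)} {c : (τ →₀ ℕ) → K} (hc : ∀ a ∈ S, c a ≠ 0) (hc₀ : c 0 = 1)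
    (hadd : ∀ a ∈ S, ∀ b ∈ S, c (a + b) = c a * c b) :
    ∃ x : τ → Kˣ, ∀ a ∈ S, c a = ∏ i, (x i : K) ^ a i := by
  classical
  let ι : S →+ (τ → ℤ) :=
    { toFun a i := (a.1 i : ℤ), map_zero' := by ext; simp, map_add' a b := by ext; simp }
  have hι : Function.Injective ι := fun a b h =>
    Subtype.ext (Finsupp.ext fun i => Nat.cast_injective (congr_fun h i))
  let u : S →+ Additive Kˣ :=
    { toFun a := .ofMul (Units.mk0 (c a) (hc a a.2))
      map_zero' := congr_arg Additive.ofMul (Units.ext hc₀)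
      map_add' a b := congr_arg Additive.ofMul (Units.ext (hadd a a.2 b b.2)) }
  obtain ⟨h, hh⟩ := exists_addMonoidHom_comp_eq (baer_additive_units K) hι u
  refine ⟨fun i => (h (Pi.single i 1)).toMul, fun a ha => ?_⟩
  have hsum : ι ⟨a, ha⟩ = ∑ i, a i • Pi.single i (1 : ℤ) := by
    ext j
    simp [ι, Finset.sum_apply, Pi.single_apply]
  have hu := DFunLike.congr_fun hh ⟨a, ha⟩
  simp only [AddMonoidHom.comp_apply, hsum, map_sum, map_nsmul] at hu
  have := congr_arg (fun z : Additive Kˣ => (z.toMul : K)) hu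
  simpa [u] using this.symm

lemma finiteType_monoidSubalgebra (A : Type*) [CommRing A] {τ : Type*}
    {M : AddSubmonoid (τ →₀ ℕ)} (hM : M.FG) : Algebra.FiniteType A (monoidSubalgebra A M) := by
  have : AddMonoid.FG M := (AddMonoid.fg_iff_addSubmonoid_fg _).2 hM
  obtain ⟨G, hG⟩ := AddMonoid.FG.fg_top (M := M)
  let S := Algebra.adjoin A (monoidMonomial A '' (G : Set M))
  have hmem : ∀ b, monoidMonomial A b ∈ S := fun b => by
    have hb : b ∈ AddSubmonoid.closure (G : Set M) := hG ▸ AddSubmonoid.mem_top b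
    induction hb using AddSubmonoid.closure_induction with
    | mem b hb => exact Algebra.subset_adjoin (Set.mem_image_of_mem _ hb)
    | zero => exact S.one_mem
    | add b c _ _ hb hc => exact monoidMonomial_add (A := A) b c ▸ S.mul_mem hb hc
  refine ⟨Subalgebra.fg_def.2 ⟨_, G.finite_toSet.image (monoidMonomial A),
    eq_top_iff.2 fun x _ => ?_⟩⟩
  rw [← sum_coeff_smul_monoidMonomial x]
  exact sum_mem fun a _ => S.smul_mem (hmem _) _

open Classical in
/-- The character `b ↦ χ (x^b)` of the monoid `M` given by a point `χ` of the spectrum of its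
monoid algebra, extended by zero outside `M`. -/
noncomputable def monoidCharacter {A : Type*} [CommRing A] {τ : Type*}
    {M : AddSubmonoid (τ →₀ ℕ)} (χ : monoidSubalgebra A M →ₐ[A] A) (a : τ →₀ ℕ) : A :=
  if h : a ∈ M then χ (monoidMonomial A ⟨a, h⟩) else 0

section MonoidCharacter

variable {A : Type*} [CommRing A] {τ : Type*} {M : AddSubmonoid (τ →₀ ℕ)}
  (χ : monoidSubalgebra A M →ₐ[A] A)

lemma monoidCharacter_coe (b : M) : monoidCharacter χ b = χ (monoidMonomial A b) :=
  dif_pos b.2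

lemma monoidCharacter_zero : monoidCharacter χ 0 = 1 :=
  (monoidCharacter_coe χ 0).trans (map_one χ)

lemma monoidCharacter_add {a b : τ →₀ ℕ} (ha : a ∈ M) (hb : b ∈ M) :
    monoidCharacter χ (a + b) = monoidCharacter χ a * monoidCharacter χ b := by
  have := monoidCharacter_coe χ (⟨a, ha⟩ + ⟨b, hb⟩)
  rwa [monoidMonomial_add, map_mul, ← monoidCharacter_coe, ← monoidCharacter_coe] at this

lemma apply_eq_sum_coeff_mul_monoidCharacter (x : monoidSubalgebra A M) :
    χ x = ∑ a ∈ (x : MvPolynomial τ A).support,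
      coeff a (x : MvPolynomial τ A) * monoidCharacter χ a := by
  conv_lhs => rw [← sum_coeff_smul_monoidMonomial x]
  rw [map_sum, ← Finset.sum_attach (support _)]
  refine Finset.sum_congr rfl fun a _ => ?_
  rw [map_smul, smul_eq_mul, ← monoidCharacter_coe]

end MonoidCharacter

end Character

section Face

variable {τ : Type*} [Finite τ] {Λ : Set (τ → ℤ)}

lemma exists_nsmul_eq_add_of_mem_coneMonoid (hΛ : Λ.Finite) {a b : τ →₀ ℕ}
    (hb : b ∈ coneMonoid Λ) (hcoord : ∀ i, b i = 0 → a i = 0)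
    (hface : ∀ l ∈ Λ, Finsupp.weight l b = 0 → Finsupp.weight l a = 0) :
    ∃ k : ℕ, ∃ a' ∈ coneMonoid Λ, k • b = a + a' := by
  cases nonempty_fintype τ
  let k : ℕ := ∑ i, a i + ∑ l ∈ hΛ.toFinset, (Finsupp.weight l a).natAbs
  have hk : ∀ i, a i ≤ k * b i := fun i => by
    rcases Nat.eq_zero_or_pos (b i) with h | h
    · simp [hcoord i h]
    · exact ((Finset.single_le_sum (fun _ _ => Nat.zero_le _) (Finset.mem_univ i)).trans
        (Nat.le_add_right _ _)).trans (Nat.le_mul_of_pos_right k h)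
  have hkl : ∀ l ∈ Λ, Finsupp.weight l a ≤ k * Finsupp.weight l b := fun l hl => by
    rcases (hb l hl).eq_or_lt with h | h
    · rw [hface l hl h.symm, ← h, mul_zero]
    · have hle : (Finsupp.weight l a).natAbs ≤ k :=
        (Finset.single_le_sum (f := fun l => (Finsupp.weight l a).natAbs)
          (fun _ _ => Nat.zero_le _) (hΛ.mem_toFinset.2 hl)).trans (Nat.le_add_left _ _)
      calc Finsupp.weight l a ≤ k := Int.le_natAbs.trans (Nat.cast_le.2 hle)
        _ ≤ k * Finsupp.weight l b := le_mul_of_one_le_right (Nat.cast_nonneg k) h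
  have hsum : k • b = a + (k • b - a) := (add_tsub_cancel_of_le fun i => hk i).symm
  refine ⟨k, k • b - a, fun l hl => ?_, hsum⟩
  have := congr_arg (Finsupp.weight l) hsum
  rw [map_add, map_nsmul, nsmul_eq_mul] at this
  linarith [hkl l hl]

lemma exists_weight_nonneg_eq_zero_iff (hΛ : Λ.Finite) {b : τ →₀ ℕ} (hb : b ∈ coneMonoid Λ) :
    ∃ φ : τ → ℤ, (∀ a ∈ coneMonoid Λ, 0 ≤ Finsupp.weight φ a) ∧
      ∀ a ∈ coneMonoid Λ, Finsupp.weight φ a = 0 ↔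
        ∃ k : ℕ, ∃ a' ∈ coneMonoid Λ, k • b = a + a' := by
  classical
  cases nonempty_fintype τ
  let φ : τ → ℤ := fun i => (if b i = 0 then 1 else 0) +
    ∑ l ∈ hΛ.toFinset with Finsupp.weight l b = 0, l i
  have hφ : ∀ a : τ →₀ ℕ, Finsupp.weight φ a = ∑ i with b i = 0, (a i : ℤ) +
      ∑ l ∈ hΛ.toFinset with Finsupp.weight l b = 0, Finsupp.weight l a := fun a => by
    rw [Finsupp.weight_eq_sum]
    simp only [φ, smul_add, Finset.smul_sum, Finset.sum_add_distrib, smul_ite, smul_zero,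
      nsmul_one, ← Finset.sum_filter]
    rw [Finset.sum_comm]
    simp only [Finsupp.weight_eq_sum]
  have hcoord : ∀ a : τ →₀ ℕ, 0 ≤ ∑ i with b i = 0, (a i : ℤ) := fun a =>
    Finset.sum_nonneg fun i _ => Nat.cast_nonneg _
  have hface : ∀ a ∈ coneMonoid Λ, ∀ l ∈ hΛ.toFinset.filter (Finsupp.weight · b = 0),
      0 ≤ Finsupp.weight l a := fun a ha l hl =>
    ha l (hΛ.mem_toFinset.1 (Finset.mem_filter.1 hl).1)
  have hφ₀ : ∀ a ∈ coneMonoid Λ, 0 ≤ Finsupp.weight φ a := fun a ha => by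
    rw [hφ]
    exact add_nonneg (hcoord a) (Finset.sum_nonneg (hface a ha))
  have hφb : Finsupp.weight φ b = 0 := by
    rw [hφ, Finset.sum_eq_zero, Finset.sum_eq_zero, add_zero]
    · exact fun l hl => (Finset.mem_filter.1 hl).2
    · exact fun i hi => Nat.cast_eq_zero.2 (Finset.mem_filter.1 hi).2
  refine ⟨φ, hφ₀, fun a ha => ⟨fun h => ?_, ?_⟩⟩
  · rw [hφ, add_eq_zero_iff_of_nonneg (hcoord a) (Finset.sum_nonneg (hface a ha)),
      Finset.sum_eq_zero_iff_of_nonneg (fun i _ => Nat.cast_nonneg _),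
      Finset.sum_eq_zero_iff_of_nonneg (hface a ha)] at h
    exact exists_nsmul_eq_add_of_mem_coneMonoid hΛ hb
      (fun i hi => Nat.cast_eq_zero.1 (h.1 i (by simpa using hi)))
      fun l hl hlb => h.2 l (by simpa [hlb] using hl)
  · rintro ⟨k, a', ha', h⟩
    have := congr_arg (Finsupp.weight φ) h
    rw [map_nsmul, hφb, smul_zero, map_add] at this
    linarith [hφ₀ a ha, hφ₀ a' ha']

lemma exists_weight_eq_zero_iff_ne_zero {K : Type*} [CommRing K] [IsDomain K] (hΛ : Λ.Finite)
    {c : (τ →₀ ℕ) → K} (hc₀ : c 0 = 1)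
    (hadd : ∀ a ∈ coneMonoid Λ, ∀ b ∈ coneMonoid Λ, c (a + b) = c a * c b)
    {A : Finset (τ →₀ ℕ)} (hA : ∀ a ∈ A, a ∈ coneMonoid Λ) :
    ∃ φ : τ → ℤ, (∀ a ∈ coneMonoid Λ, 0 ≤ Finsupp.weight φ a) ∧
      ∀ a ∈ A, Finsupp.weight φ a = 0 ↔ c a ≠ 0 := by
  classical
  have hnsmul : ∀ (k : ℕ), ∀ a ∈ coneMonoid Λ, c (k • a) = c a ^ k := fun k a ha => by
    induction k with
    | zero => simp [hc₀]
    | succ k ih => rw [succ_nsmul, hadd _ (nsmul_mem ha k) _ ha, ih, pow_succ]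
  have hsum : ∀ B ⊆ A, c (∑ a ∈ B, a) = ∏ a ∈ B, c a := fun B hB => by
    induction B using Finset.induction_on with
    | empty => simp [hc₀]
    | insert a B ha ih =>
      rw [Finset.insert_subset_iff] at hB
      rw [Finset.sum_insert ha, Finset.prod_insert ha, ← ih hB.2,
        hadd _ (hA a hB.1) _ (sum_mem fun b hb => hA b (hB.2 hb))]
  let b := ∑ a ∈ A with c a ≠ 0, a
  have hb : b ∈ coneMonoid Λ := sum_mem fun a ha => hA a (Finset.mem_filter.1 ha).1
  have hcb : c b ≠ 0 := by
    rw [hsum _ (Finset.filter_subset _ _), Finset.prod_ne_zero_iff]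
    exact fun a ha => (Finset.mem_filter.1 ha).2
  obtain ⟨φ, hφ₀, hφ⟩ := exists_weight_nonneg_eq_zero_iff hΛ hb
  refine ⟨φ, hφ₀, fun a ha => (hφ a (hA a ha)).trans ⟨?_, fun hca => ?_⟩⟩
  · rintro ⟨k, a', ha', h⟩
    have := congr_arg c h
    rw [hnsmul k b hb, hadd a (hA a ha) a' ha'] at this
    exact left_ne_zero_of_mul (this ▸ pow_ne_zero k hcb)
  · have haB : a ∈ A.filter (c · ≠ 0) := Finset.mem_filter.2 ⟨ha, hca⟩
    exact ⟨1, ∑ a' ∈ (A.filter (c · ≠ 0)).erase a, a',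
      sum_mem fun a' ha' => hA a' (Finset.mem_filter.1 (Finset.mem_of_mem_erase ha')).1,
      by rw [one_smul, Finset.add_sum_erase _ (fun a => a) haB]⟩

end Face

section Homogenize

variable {σ R : Type*} [CommSemiring R]

/-- The element `t^s * g` of the polynomial ring in one more variable `t`, encoded as `X none`.
For `g` in the `s`-th step of a filtration, it is the element of degree `s` of the Rees algebra
corresponding to `g`. -/
noncomputable def homogenize (s : ℕ) : MvPolynomial σ R →ₗ[R] MvPolynomial (Option σ) R :=
  LinearMap.mulLeft R (X none ^ s) ∘ₗ (rename some).toLinearMap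

lemma homogenize_apply (s : ℕ) (g : MvPolynomial σ R) :
    homogenize s g = X none ^ s * rename some g := rfl

lemma homogenize_monomial (s : ℕ) (m : σ →₀ ℕ) (a : R) :
    homogenize s (monomial m a) = monomial (m.optionElim s) a := by
  have h : Finsupp.single none s + Finsupp.mapDomain some m = m.optionElim s := by
    ext j
    cases j with
    | none => simp [Finsupp.mapDomain_of_notMem_range]
    | some i => simp [Finsupp.mapDomain_apply (Option.some_injective σ)]
  rw [homogenize_apply, rename_monomial, X_pow_eq_monomial, monomial_mul, one_mul, h]

lemma homogenize_mul (s t : ℕ) (g h : MvPolynomial σ R) :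
    homogenize (s + t) (g * h) = homogenize s g * homogenize t h := by
  simp only [homogenize_apply, map_mul, pow_add, mul_mul_mul_comm]

lemma coeff_homogenize (s : ℕ) (g : MvPolynomial σ R) (a : Option σ →₀ ℕ) :
    coeff a (homogenize s g) = if a none = s then coeff a.some g else 0 := by
  classical
  induction g using MvPolynomial.induction_on' with
  | monomial m c =>
    have h : m.optionElim s = a ↔ a none = s ∧ m = a.some := by
      constructor
      · rintro rfl
        simp
      · rintro ⟨rfl, rfl⟩
        exact Finsupp.optionElim_some a
    simp only [homogenize_monomial, coeff_monomial, h, ite_and]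
  | add p q hp hq =>
    rw [map_add, coeff_add, hp, hq, coeff_add]
    split_ifs <;> simp only [add_zero]

lemma mem_support_homogenize {s : ℕ} {g : MvPolynomial σ R} {a : Option σ →₀ ℕ} :
    a ∈ (homogenize s g).support ↔ a none = s ∧ a.some ∈ g.support := by
  rw [mem_support_iff, coeff_homogenize, ite_ne_right_iff, mem_support_iff]

/-- Setting the Rees parameter `t` equal to `1`. -/
noncomputable def dehomogenize : MvPolynomial (Option σ) R →ₐ[R] MvPolynomial σ R :=
  aeval fun j => j.elim 1 X

@[simp]
lemma dehomogenize_homogenize (s : ℕ) (g : MvPolynomial σ R) :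
    dehomogenize (homogenize s g) = g := by
  have hX : (fun j : Option σ => j.elim (1 : MvPolynomial σ R) X) ∘ some = X := rfl
  rw [homogenize_apply, map_mul, map_pow, dehomogenize, aeval_X, aeval_rename, hX, aeval_X_left]
  simp

lemma homogenize_dehomogenize {s : ℕ} {P : MvPolynomial (Option σ) R}
    (hP : ∀ a ∈ P.support, a none = s) : homogenize s (dehomogenize P) = P := by
  conv_lhs => rw [P.as_sum]
  conv_rhs => rw [P.as_sum]
  rw [map_sum, map_sum]
  refine Finset.sum_congr rfl fun a ha => ?_
  rw [← Finsupp.optionElim_some a, hP a ha, ← homogenize_monomial, dehomogenize_homogenize]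

end Homogenize

section ToricDerivative

variable {σ R : Type*} [CommSemiring R]

/-- The toric derivative `uᵢ ∂f/∂uᵢ`. -/
noncomputable def toricDeriv (f : MvPolynomial σ R) (i : σ) : MvPolynomial σ R :=
  X i * pderiv i f

lemma coeff_toricDeriv (f : MvPolynomial σ R) (i : σ) (m : σ →₀ ℕ) :
    coeff m (toricDeriv f i) = m i * coeff m f := by
  classical
  rw [toricDeriv]
  induction f using MvPolynomial.induction_on' with
  | monomial u a =>
    rw [X_mul_pderiv_monomial, coeff_smul, coeff_monomial, nsmul_eq_mul]
    split_ifs with h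
    · rw [h]
    · simp only [mul_zero]
  | add p q hp hq => rw [map_add, mul_add, coeff_add, coeff_add, hp, hq, mul_add]

lemma support_toricDeriv_subset (f : MvPolynomial σ R) (i : σ) :
    (toricDeriv f i).support ⊆ f.support := fun m hm => by
  rw [mem_support_iff, coeff_toricDeriv] at hm
  exact mem_support_iff.2 (right_ne_zero_of_mul hm)

end ToricDerivative

namespace NewtonData

variable {σ : Type*} {f : MvPolynomial σ ℂ} (D : NewtonData f)

/-- The lattice points of the cone over `e` times the Newton polytope, i.e. the exponents of the
monomials of the Rees algebra of the Newton filtration. -/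
abbrev cone : AddSubmonoid (Option σ →₀ ℕ) := coneMonoid D.Λ

lemma optionElim_mem_cone {m : σ →₀ ℕ} {s : ℕ} : m.optionElim s ∈ D.cone ↔ D.N m ≤ s := by
  rw [D.mem_iff, Finsupp.some_optionElim, Finsupp.optionElim_apply_none]

lemma N_le_e {v : σ →₀ ℕ} (hv : v ∈ newtonPoints f) : D.N v ≤ D.e := by
  have h : (D.N v : ℝ) ≤ D.e := by
    rw [D.coe_N]
    exact mul_le_of_le_one_right (Nat.cast_nonneg _)
      (gauge_le_one_of_mem (toR_mem_newtonPolytope hv))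
  exact_mod_cast h

lemma N_add_le (m k : σ →₀ ℕ) : D.N (m + k) ≤ D.N m + D.N k := by
  have h := D.cone.add_mem (D.optionElim_mem_cone.2 (le_refl (D.N m)))
    (D.optionElim_mem_cone.2 (le_refl (D.N k)))
  rw [D.mem_iff] at h
  simpa using h

lemma single_none_mem_cone : Finsupp.single none 1 ∈ D.cone := by
  have h : D.N 0 = 0 := by
    have := D.coe_N 0
    have hzero : toR (0 : σ →₀ ℕ) = 0 := funext fun _ => Nat.cast_zero
    rw [nu, hzero, gauge_zero, mul_zero] at this
    exact_mod_cast this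
  rw [← Finsupp.optionElim_zero, optionElim_mem_cone, h]
  exact zero_le_one

lemma none_pos_of_mem_cone {a : Option σ →₀ ℕ} (ha : a ∈ D.cone) (ha₀ : a ≠ 0) : 0 < a none := by
  obtain ⟨c, hc, hsum⟩ := D.exists_eq_sum ha
  refine Nat.pos_of_ne_zero fun h => ha₀ (Finsupp.ext fun j => ?_)
  have hnone := hsum none
  simp only [h, Nat.cast_zero, Finsupp.optionElim_apply_none, ← Finset.sum_mul] at hnone
  have hc₀ := (mul_eq_zero.1 hnone.symm).resolve_right (Nat.cast_ne_zero.2 D.e_pos.ne')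
  have hj := hsum j
  rw [Finset.sum_eq_zero fun v hv => by rw [(Finset.sum_eq_zero_iff_of_nonneg hc).1 hc₀ v hv,
    zero_mul]] at hj
  exact_mod_cast hj

lemma exists_add_single_mem_cone (j : Option σ) :
    ∃ a ∈ D.cone, a + Finsupp.single j 1 ∈ D.cone := by
  cases j with
  | none => exact ⟨0, D.cone.zero_mem, by simpa using D.single_none_mem_cone⟩
  | some i =>
    refine ⟨Finsupp.optionElim (D.N 0 + D.N (Finsupp.single i 1)) 0,
      D.optionElim_mem_cone.2 le_self_add, D.mem_iff.2 ?_⟩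
    have h : (Finsupp.single (some i) 1 : Option σ →₀ ℕ).some = Finsupp.single i 1 := by
      ext k
      classical simp [Finsupp.single_apply]
    simp [h]

/-- The Newton filtration indexed by multiples of `1 / e`. -/
noncomputable def filtration (s : ℤ) : Submodule ℂ (MvPolynomial σ ℂ) :=
  restrictSupport ℂ {m | (D.N m : ℤ) ≤ s}

lemma mem_filtration {s : ℤ} {g : MvPolynomial σ ℂ} :
    g ∈ D.filtration s ↔ ∀ m ∈ g.support, (D.N m : ℤ) ≤ s :=
  mem_restrictSupport_iff ℂ

lemma filtration_mono : Monotone D.filtration := fun _ _ h _ hg =>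
  D.mem_filtration.2 fun m hm => (D.mem_filtration.1 hg m hm).trans h

lemma filtration_of_neg {s : ℤ} (hs : s < 0) : D.filtration s = ⊥ := by
  refine (Submodule.eq_bot_iff _).2 fun g hg => support_eq_empty.1 ?_
  refine Finset.eq_empty_of_forall_notMem fun m hm => ?_
  exact ((Nat.cast_nonneg _).trans (D.mem_filtration.1 hg m hm)).not_gt hs

lemma mul_mem_filtration {s t : ℤ} {g h : MvPolynomial σ ℂ} (hg : g ∈ D.filtration s)
    (hh : h ∈ D.filtration t) : g * h ∈ D.filtration (s + t) := by
  classical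
  refine D.mem_filtration.2 fun a ha => ?_
  obtain ⟨m, hm, k, hk, rfl⟩ := Finset.mem_add.1 (support_mul g h ha)
  have hN := D.N_add_le m k
  linarith [D.mem_filtration.1 hg m hm, D.mem_filtration.1 hh k hk]

lemma toricDeriv_mem_filtration (i : σ) : toricDeriv f i ∈ D.filtration D.e :=
  D.mem_filtration.2 fun _ hm => Nat.cast_le.2 <|
    D.N_le_e (mem_newtonPoints_of_mem_support (support_toricDeriv_subset f i hm))

lemma homogenize_mem_monoidSubalgebra {s : ℕ} {g : MvPolynomial σ ℂ} :
    homogenize s g ∈ monoidSubalgebra ℂ D.cone ↔ g ∈ D.filtration s := by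
  rw [mem_monoidSubalgebra, mem_filtration]
  simp only [mem_support_homogenize]
  constructor
  · intro h m hm
    exact Nat.cast_le.2 (D.optionElim_mem_cone.1 (h (m.optionElim s) (by simpa using hm)))
  · rintro h a ⟨rfl, ha⟩
    exact D.mem_iff.2 (Nat.cast_le.1 (h _ ha))

lemma dehomogenize_mem_filtration {s : ℕ} {x : monoidSubalgebra ℂ D.cone}
    (hx : ∀ a ∈ (x : MvPolynomial (Option σ) ℂ).support, a none = s) :
    dehomogenize (x : MvPolynomial (Option σ) ℂ) ∈ D.filtration s := by
  rw [← D.homogenize_mem_monoidSubalgebra, homogenize_dehomogenize hx]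
  exact x.2

/-- The system of parameters of the Rees algebra of the Newton filtration formed by the Rees
parameter and the homogenized toric derivatives. -/
noncomputable def toricSystem : Option σ → monoidSubalgebra ℂ D.cone
  | none => monoidMonomial ℂ ⟨Finsupp.single none 1, D.single_none_mem_cone⟩
  | some i => ⟨homogenize D.e (toricDeriv f i),
      D.homogenize_mem_monoidSubalgebra.2 (D.toricDeriv_mem_filtration i)⟩

lemma exists_weight_optionElim_eq_zero [Finite σ] {φ : Option σ → ℤ}
    (hφ : ∀ a ∈ D.cone, 0 ≤ Finsupp.weight φ a) {b : Option σ →₀ ℕ} (hb : b ∈ D.cone) (hb₀ : b ≠ 0)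
    (hφb : Finsupp.weight φ b = 0) :
    ∃ v ∈ newtonPoints f, Finsupp.weight φ (v.optionElim D.e) = 0 := by
  cases nonempty_fintype σ
  by_contra! hne
  obtain ⟨c, hc, hsum⟩ := D.exists_eq_sum hb
  have hpos : ∀ v ∈ newtonPoints f, (0 : ℝ) < Finsupp.weight φ (v.optionElim D.e) := fun v hv =>
    Int.cast_pos.2 <| (hφ _ (D.optionElim_mem_cone.2 (D.N_le_e hv))).lt_of_ne' (hne v hv)
  have hzero : ∑ v ∈ newtonPoints f, c v * Finsupp.weight φ (v.optionElim D.e) = (0 : ℝ) := by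
    rw [← Int.cast_zero, ← hφb]
    simp only [Finsupp.weight_eq_sum, nsmul_eq_mul, Int.cast_sum, Int.cast_mul,
      Int.cast_natCast, hsum, Finset.mul_sum, Finset.sum_mul]
    rw [Finset.sum_comm]
    simp only [mul_assoc]
  rw [Finset.sum_eq_zero_iff_of_nonneg fun v hv => mul_nonneg (hc v hv) (hpos v hv).le] at hzero
  refine hb₀ (Finsupp.ext fun j => ?_)
  have hj := hsum j
  rw [Finset.sum_eq_zero fun v hv => by
    rw [(mul_eq_zero.1 (hzero v hv)).resolve_right (hpos v hv).ne', zero_mul]] at hj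
  exact_mod_cast hj

section Face

variable [Fintype σ]

lemma weight_optionElim (φ : Option σ → ℤ) (m : σ →₀ ℕ) (s : ℕ) :
    Finsupp.weight φ (m.optionElim s) = s * φ none + ∑ i, m i * φ (some i) := by
  simp [Finsupp.weight_eq_sum, Fintype.sum_option]

/-- The face of the Newton polytope on which the linear form `φ` on the cone vanishes. -/
def face (φ : Option σ → ℤ) : Set (σ → ℝ) :=
  {x ∈ newtonPolytope f | D.e * φ none + ∑ i, x i * φ (some i) = 0}

variable {D} {φ : Option σ → ℤ}

lemma toR_mem_face_iff {m : σ →₀ ℕ} (hm : m ∈ newtonPoints f) :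
    toR m ∈ D.face φ ↔ Finsupp.weight φ (m.optionElim D.e) = 0 := by
  rw [face, Set.mem_sep_iff, and_iff_right (toR_mem_newtonPolytope hm), weight_optionElim]
  simp only [toR]
  exact_mod_cast Iff.rfl

lemma nbFace_face (hφ : ∀ a ∈ D.cone, 0 ≤ Finsupp.weight φ a) (hpos : 0 < φ none)
    (hface : ∃ v ∈ newtonPoints f, Finsupp.weight φ (v.optionElim D.e) = 0) :
    NBFace f (D.face φ) := by
  let l : (σ → ℝ) →ₗ[ℝ] ℝ := -∑ i, (φ (some i) : ℝ) • LinearMap.proj i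
  have hl : ∀ x, l x = -∑ i, x i * φ (some i) := fun x => by
    simp [l, LinearMap.sum_apply, mul_comm]
  obtain ⟨v, hv, hφv⟩ := hface
  refine ⟨⟨⟨toR v, (toR_mem_face_iff hv).2 hφv⟩, l, D.e * φ none, fun x hx => ?_, ?_⟩, fun h => ?_⟩
  · rw [newtonPolytope_eq_convexHull_image] at hx
    refine convexHull_min ?_ (convex_halfSpace_le l.isLinear _) hx
    rintro _ ⟨m, hm, rfl⟩
    have hnonneg := hφ _ (D.optionElim_mem_cone.2 (D.N_le_e hm))
    rw [weight_optionElim] at hnonneg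
    have hcast : (0 : ℝ) ≤ D.e * φ none + ∑ i, (m i : ℝ) * φ (some i) := by
      exact_mod_cast hnonneg
    exact (hl (toR m)).trans_le (neg_le_iff_add_nonneg.2 hcast)
  · ext x
    refine and_congr_right fun _ => ?_
    rw [hl, neg_eq_iff_add_eq_zero, add_comm]
  · have h₀ := h.2
    simp only [Pi.zero_apply, zero_mul, Finset.sum_const_zero, add_zero] at h₀
    exact (mul_pos (Nat.cast_pos.2 D.e_pos) (Int.cast_pos.2 hpos)).ne' h₀

lemma exists_nbFace_weight_eq_zero_iff_ne_zero {c : (Option σ →₀ ℕ) → ℂ} (hc₀ : c 0 = 1)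
    (hadd : ∀ a ∈ D.cone, ∀ b ∈ D.cone, c (a + b) = c a * c b)
    (hnone : c (Finsupp.single none 1) = 0) {b : Option σ →₀ ℕ} (hb : b ∈ D.cone) (hb₀ : b ≠ 0)
    (hcb : c b ≠ 0) :
    ∃ φ : Option σ → ℤ, NBFace f (D.face φ) ∧
      ∀ m ∈ newtonPoints f,
        Finsupp.weight φ (m.optionElim D.e) = 0 ↔ c (m.optionElim D.e) ≠ 0 := by
  classical
  obtain ⟨φ, hφ, hφc⟩ := exists_weight_eq_zero_iff_ne_zero D.finite_Λ hc₀ hadd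
    (A := {Finsupp.single none 1, b} ∪ (newtonPoints f).image (Finsupp.optionElim D.e)) (by
    simp only [Finset.mem_union, Finset.mem_insert, Finset.mem_singleton, Finset.mem_image]
    rintro a ((rfl | rfl) | ⟨v, hv, rfl⟩)
    exacts [D.single_none_mem_cone, hb, D.optionElim_mem_cone.2 (D.N_le_e hv)])
  have hpos : 0 < φ none := by
    have hne := mt (hφc (Finsupp.single none 1) (by simp)).1 (not_not.2 hnone)
    have h := (hφ _ D.single_none_mem_cone).lt_of_ne' hne
    rwa [Finsupp.weight_single, one_smul] at h
  have hφb : Finsupp.weight φ b = 0 := (hφc b (by simp)).2 hcb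
  exact ⟨φ, nbFace_face hφ hpos (D.exists_weight_optionElim_eq_zero hφ hb hb₀ hφb),
    fun m hm => hφc _ (Finset.mem_union_right _ (Finset.mem_image_of_mem _ hm))⟩

lemma pow_mul_eval_faceRestrict {c : (Option σ →₀ ℕ) → ℂ} {x : Option σ → ℂ}
    (hφc : ∀ m ∈ f.support, Finsupp.weight φ (m.optionElim D.e) = 0 ↔ c (m.optionElim D.e) ≠ 0)
    (hx : ∀ m ∈ f.support, c (m.optionElim D.e) ≠ 0 →
      c (m.optionElim D.e) = ∏ j, x j ^ m.optionElim D.e j)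
    {g : MvPolynomial σ ℂ} (hg : g.support ⊆ f.support) :
    x none ^ D.e * eval (x ∘ some) (faceRestrict (D.face φ) g) =
      ∑ m ∈ g.support, coeff m g * c (m.optionElim D.e) := by
  rw [faceRestrict, map_sum, Finset.mul_sum]
  refine Finset.sum_congr rfl fun m hm => ?_
  rw [toR_mem_face_iff (mem_newtonPoints_of_mem_support (hg hm)), hφc m (hg hm)]
  split_ifs with h
  · rw [hx m (hg hm) h, Fintype.prod_option, eval_monomial, Finsupp.prod_fintype _ _ (by simp)]
    simp only [Function.comp_apply, Finsupp.optionElim_apply_none, Finsupp.optionElim_apply_some]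
    ring
  · rw [not_not.1 h, map_zero, mul_zero, mul_zero]

end Face

lemma apply_toricSystem_some (χ : monoidSubalgebra ℂ D.cone →ₐ[ℂ] ℂ) (i : σ) :
    χ (D.toricSystem (some i)) = ∑ m ∈ (toricDeriv f i).support,
      coeff m (toricDeriv f i) * monoidCharacter χ (m.optionElim D.e) := by
  rw [apply_eq_sum_coeff_mul_monoidCharacter]
  refine Finset.sum_nbij' Finsupp.some (Finsupp.optionElim D.e) (fun a ha => ?_) (fun m hm => ?_)
    (fun a ha => ?_) (fun m _ => Finsupp.some_optionElim _ _) fun a ha => ?_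
  · exact (mem_support_homogenize.1 ha).2
  · exact mem_support_homogenize.2 (by simpa using hm)
  all_goals
    obtain ⟨hnone, -⟩ := mem_support_homogenize.1 ha
    rw [← hnone, Finsupp.optionElim_some]
  change coeff a (homogenize D.e _) * _ = _
  rw [coeff_homogenize, if_pos hnone]

/-- A point of the zero set of the system at which some monomial `b ≠ 0` does not vanish would be a
point of the torus orbit of a face of the Newton boundary, contradicting nondegeneracy. -/
theorem monoidMonomial_mem_radical_toricSystem [Finite σ] (hf : Nondegenerate f) (b : D.cone)
    (hb : b ≠ 0) : monoidMonomial ℂ b ∈ (Ideal.span (Set.range D.toricSystem)).radical := by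
  classical
  cases nonempty_fintype σ
  by_contra hrad
  have : Algebra.FiniteType ℂ (monoidSubalgebra ℂ D.cone) :=
    finiteType_monoidSubalgebra ℂ (coneMonoid_fg D.finite_Λ)
  obtain ⟨χ, hχ, hχb⟩ := exists_algHom_apply_ne_zero ℂ hrad
  replace hχ j : χ (D.toricSystem j) = 0 := hχ _ (Ideal.subset_span (Set.mem_range_self j))
  let c := monoidCharacter χ
  have hadd : ∀ a ∈ D.cone, ∀ b ∈ D.cone, c (a + b) = c a * c b := fun a ha b hb =>
    monoidCharacter_add χ ha hb
  obtain ⟨φ, hface, hφc⟩ := exists_nbFace_weight_eq_zero_iff_ne_zero (monoidCharacter_zero χ) hadd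
    ((monoidCharacter_coe χ ⟨_, D.single_none_mem_cone⟩).trans (hχ none)) b.2 (by simpa using hb)
    ((monoidCharacter_coe χ b).trans_ne hχb)
  let S : AddSubmonoid (Option σ →₀ ℕ) :=
    { carrier := {a ∈ D.cone | c a ≠ 0}
      zero_mem' := ⟨D.cone.zero_mem, by simp [c, monoidCharacter_zero]⟩
      add_mem' ha hb := ⟨D.cone.add_mem ha.1 hb.1,
        (hadd _ ha.1 _ hb.1).trans_ne (mul_ne_zero ha.2 hb.2)⟩ }
  obtain ⟨x, hx⟩ := exists_units_eq_prod_pow (S := S) (fun a ha => ha.2) (monoidCharacter_zero χ)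
    fun a ha b hb => hadd a ha.1 b hb.1
  refine hf _ hface ⟨fun i => x (some i), fun i => (x (some i)).ne_zero, fun i => ?_⟩
  refine (mul_eq_zero.1 ?_).resolve_left (pow_ne_zero D.e (x none).ne_zero)
  rw [← hχ (some i), apply_toricSystem_some]
  exact pow_mul_eval_faceRestrict (fun m hm => hφc m (mem_newtonPoints_of_mem_support hm))
    (fun m hm h => hx _
      ⟨D.optionElim_mem_cone.2 (D.N_le_e (mem_newtonPoints_of_mem_support hm)), h⟩)
    (support_toricDeriv_subset f i)

/-- The degrees of the members of the toric system: `1` for the Rees parameter, `e` for the toric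
derivatives. -/
def toricDegree : Option σ → ℕ := fun j => j.elim 1 fun _ => D.e

lemma toricDegree_pos (j : Option σ) : 0 < D.toricDegree j := by
  cases j
  exacts [zero_lt_one, D.e_pos]

open Classical in
lemma isWeightedHomogeneous_toricSystem (j : Option σ) :
    IsWeightedHomogeneous (Pi.single none 1 : Option σ → ℕ)
      (D.toricSystem j : MvPolynomial (Option σ) ℂ) (D.toricDegree j) := by
  intro a ha
  rw [← mem_support_iff] at ha
  rw [Finsupp.weight_single_one_apply]
  cases j with
  | none => rw [Finset.mem_singleton.1 (support_monomial_subset ha), Finsupp.single_eq_same]; rfl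
  | some i => exact (mem_support_homogenize.1 ha).1

theorem isPermutableRegular_toricSystem [Finite σ] (hf : Nondegenerate f) :
    IsPermutableRegular D.toricSystem := by
  classical
  exact isPermutableRegular_of_monoidMonomial_mem_radical D.finite_Λ D.exists_add_single_mem_cone
    (fun b hb hb₀ => (Finsupp.weight_single_one_apply none b).symm ▸ D.none_pos_of_mem_cone hb hb₀)
    D.isWeightedHomogeneous_toricSystem D.toricDegree_pos
    (D.monoidMonomial_mem_radical_toricSystem hf)

end NewtonData

/-! ### Submodules spanned by multiples of bounded degree -/

section FilteredSpan

variable {K A ι : Type*} [CommSemiring K] [CommSemiring A] [Algebra K A]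

/-- For a filtration `F` and elements `L j` of filtration degree `e`, the part of the ideal
`(L j)_{j ∈ J}` visible in filtration degree `s`: the sums `∑ r j * L j` in which each `r j` has
filtration degree at most `s - e`. -/
def filteredSpan (F : ℤ → Submodule K A) (e : ℤ) (L : ι → A) (J : Finset ι) (s : ℤ) :
    Submodule K A :=
  ⨆ j ∈ J, (F (s - e)).map (LinearMap.mulRight K (L j))

variable {F : ℤ → Submodule K A} {e : ℤ} {L : ι → A}

lemma mem_filteredSpan {J : Finset ι} {s : ℤ} {x : A} :
    x ∈ filteredSpan F e L J s ↔
      ∃ r : ι → A, (∀ j, r j ∈ F (s - e)) ∧ ∑ j ∈ J, r j * L j = x := by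
  rw [filteredSpan, Submodule.mem_iSup_finset_iff_exists_sum]
  constructor
  · rintro ⟨μ, rfl⟩
    choose r hr hμ using fun j => (μ j).2
    exact ⟨r, hr, Finset.sum_congr rfl fun j _ => hμ j⟩
  · rintro ⟨r, hr, rfl⟩
    exact ⟨fun j => ⟨_, Submodule.mem_map_of_mem (hr j)⟩, rfl⟩

lemma filteredSpan_empty (s : ℤ) : filteredSpan F e L ∅ s = ⊥ := by
  simp only [filteredSpan, Finset.notMem_empty, iSup_false, iSup_bot]

lemma filteredSpan_insert [DecidableEq ι] (i : ι) (J : Finset ι) (s : ℤ) :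
    filteredSpan F e L (insert i J) s =
      (F (s - e)).map (LinearMap.mulRight K (L i)) ⊔ filteredSpan F e L J s :=
  Finset.iSup_insert i J _

lemma filteredSpan_le {J : Finset ι} {s : ℤ} (hL : ∀ j, ∀ x ∈ F (s - e), x * L j ∈ F s) :
    filteredSpan F e L J s ≤ F s :=
  iSup₂_le fun j _ => Submodule.map_le_iff_le_comap.2 (hL j)

lemma mul_mem_filteredSpan {J : Finset ι} {s t : ℤ} {x y : A}
    (hy : ∀ r ∈ F (s - e), r * y ∈ F (t - e)) (hx : x ∈ filteredSpan F e L J s) :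
    x * y ∈ filteredSpan F e L J t := by
  obtain ⟨r, hr, rfl⟩ := mem_filteredSpan.1 hx
  exact mem_filteredSpan.2 ⟨fun j => r j * y, fun j => hy _ (hr j), by
    simp only [Finset.sum_mul, mul_right_comm]⟩

end FilteredSpan

namespace NewtonData

variable {σ : Type*} {f : MvPolynomial σ ℂ} (D : NewtonData f)

lemma mul_toricDeriv_mem_filtration {s : ℤ} (i : σ) {g : MvPolynomial σ ℂ}
    (hg : g ∈ D.filtration (s - D.e)) : g * toricDeriv f i ∈ D.filtration s := by
  simpa only [sub_add_cancel] using D.mul_mem_filtration hg (D.toricDeriv_mem_filtration i)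

/-- The elements of the Newton filtration of degree at most `s / e` in the ideal generated by the
toric derivatives `uⱼ ∂f/∂uⱼ`, `j ∈ J`, which are visible as such in this degree. -/
noncomputable abbrev idealFiltration (J : Finset σ) (s : ℤ) : Submodule ℂ (MvPolynomial σ ℂ) :=
  filteredSpan D.filtration D.e (toricDeriv f) J s

lemma idealFiltration_le (J : Finset σ) (s : ℤ) : D.idealFiltration J s ≤ D.filtration s :=
  filteredSpan_le fun i _ hg => D.mul_toricDeriv_mem_filtration i hg

lemma dehomogenize_mem_idealFiltration {J : Finset σ} {s : ℕ} {x : monoidSubalgebra ℂ D.cone}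
    (hx : ∀ a ∈ (x : MvPolynomial (Option σ) ℂ).support, a none = s)
    (hspan : x ∈ Ideal.span (D.toricSystem '' (J.map .some))) :
    dehomogenize (x : MvPolynomial (Option σ) ℂ) ∈ D.idealFiltration J s := by
  classical
  obtain ⟨r, hr, hsum⟩ := exists_monoidComponent_eq_sum D.isWeightedHomogeneous_toricSystem hspan s
  rw [monoidComponent_eq_self fun a ha => (Finsupp.weight_single_one_apply none a).trans
    (hx a (mem_support_iff.2 ha)), Finset.sum_map] at hsum
  have hdeg : ∀ j, ∀ a ∈ (r (some j) : MvPolynomial (Option σ) ℂ).support, a none + D.e = s :=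
    fun j a ha => (Finsupp.weight_single_one_apply none a ▸ hr (some j) a ha :)
  refine mem_filteredSpan.2
    ⟨fun j => dehomogenize (r (some j) : MvPolynomial (Option σ) ℂ), fun j => ?_, ?_⟩
  · rcases le_or_gt D.e s with hs | hs
    · rw [← Nat.cast_sub hs]
      exact D.dehomogenize_mem_filtration fun a ha => (Nat.sub_eq_of_eq_add (hdeg j a ha).symm).symm
    · have hzero : (r (some j) : MvPolynomial (Option σ) ℂ) = 0 :=
        support_eq_empty.1 <| Finset.eq_empty_of_forall_notMem fun a ha => by
          have := hdeg j a ha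
          lia
      simp only [hzero, map_zero, zero_mem]
  · rw [hsum, AddSubmonoidClass.coe_finsetSum, map_sum]
    refine Finset.sum_congr rfl fun j _ => ?_
    rw [Function.Embedding.some_apply, Subalgebra.coe_mul, map_mul]
    exact congr_arg _ (dehomogenize_homogenize D.e _).symm

lemma mem_span_toricSystem_of_dehomogenize_mem {J : Finset σ} {s : ℕ}
    {x : monoidSubalgebra ℂ D.cone}
    (hx : ∀ a ∈ (x : MvPolynomial (Option σ) ℂ).support, a none = s)
    (hmem : dehomogenize (x : MvPolynomial (Option σ) ℂ) ∈ D.idealFiltration J s) :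
    x ∈ Ideal.span (D.toricSystem '' (J.map .some)) := by
  obtain ⟨r, hr, hsum⟩ := mem_filteredSpan.1 hmem
  rcases le_or_gt D.e s with hs | hs
  · simp only [← Nat.cast_sub hs] at hr
    have hx_sum : x = ∑ j ∈ J, ⟨homogenize (s - D.e) (r j),
        D.homogenize_mem_monoidSubalgebra.2 (hr j)⟩ * D.toricSystem (some j) := by
      ext1
      rw [← homogenize_dehomogenize hx, ← hsum, map_sum, AddSubmonoidClass.coe_finsetSum]
      refine Finset.sum_congr rfl fun j _ => ?_
      rw [Subalgebra.coe_mul, toricSystem, ← homogenize_mul, Nat.sub_add_cancel hs]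
    rw [hx_sum]
    exact Ideal.sum_mem _ fun j hj => Ideal.mul_mem_left _ _ <| Ideal.subset_span <|
      Set.mem_image_of_mem _ (Finset.mem_map_of_mem _ hj)
  · have hr₀ : ∀ j, r j = 0 := fun j => by
      have := hr j
      rwa [D.filtration_of_neg (by lia), Submodule.mem_bot] at this
    have hx₀ : x = 0 := by
      ext1
      rw [← homogenize_dehomogenize hx, ← hsum]
      simp only [hr₀, zero_mul, Finset.sum_const_zero, map_zero, ZeroMemClass.coe_zero]
    rw [hx₀]
    exact zero_mem _

/-- Uniformity in `i`: the case `i = none` says that membership in the ideal is not affected by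
enlarging the degrees of the coefficients, the case `i = some k` that the toric derivatives form a
regular sequence strictly compatible with the filtration. -/
lemma mem_idealFiltration_of_mul_mem [Finite σ] (hf : Nondegenerate f) {J : Finset σ}
    {i : Option σ} (hi : i ∉ J.map .some) {s : ℤ} {g : MvPolynomial σ ℂ}
    (hg : g ∈ D.filtration s)
    (hmul : g * dehomogenize (D.toricSystem i : MvPolynomial (Option σ) ℂ) ∈
      D.idealFiltration J (s + D.toricDegree i)) :
    g ∈ D.idealFiltration J s := by
  classical
  rcases lt_or_ge s 0 with hs | hs
  · rw [D.filtration_of_neg hs, Submodule.mem_bot] at hg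
    exact hg ▸ zero_mem _
  lift s to ℕ using hs
  let x : monoidSubalgebra ℂ D.cone :=
    ⟨homogenize s g, D.homogenize_mem_monoidSubalgebra.2 hg⟩
  have hx : ∀ a ∈ (x : MvPolynomial (Option σ) ℂ).support, a none = s := fun a ha =>
    (mem_support_homogenize.1 ha).1
  have hxi : ∀ a ∈ (x * D.toricSystem i : MvPolynomial (Option σ) ℂ).support,
      a none = s + D.toricDegree i := fun a ha => by
    obtain ⟨b, hb, c, hc, rfl⟩ := Finset.mem_add.1 (support_mul _ _ ha)
    have hc := D.isWeightedHomogeneous_toricSystem i (mem_support_iff.1 hc)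
    rw [Finsupp.weight_single_one_apply] at hc
    rw [Finsupp.add_apply, hx b hb, hc]
  have hdehom : dehomogenize (x : MvPolynomial (Option σ) ℂ) = g := dehomogenize_homogenize s g
  rw [← hdehom]
  refine D.dehomogenize_mem_idealFiltration hx (D.isPermutableRegular_toricSystem hf _ i hi x ?_)
  refine D.mem_span_toricSystem_of_dehomogenize_mem hxi ?_
  rwa [Subalgebra.coe_mul, map_mul, hdehom, Nat.cast_add]

lemma mem_idealFiltration_of_mul_toricDeriv_mem [Finite σ] (hf : Nondegenerate f) {J : Finset σ}
    {i : σ} (hi : i ∉ J) {s : ℤ} {g : MvPolynomial σ ℂ} (hg : g ∈ D.filtration s)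
    (hmul : g * toricDeriv f i ∈ D.idealFiltration J (s + D.e)) : g ∈ D.idealFiltration J s := by
  refine D.mem_idealFiltration_of_mul_mem hf (i := some i) (by simpa using hi) hg ?_
  rwa [toricSystem, dehomogenize_homogenize]

lemma mem_idealFiltration_of_le [Finite σ] (hf : Nondegenerate f) {J : Finset σ} {s t : ℤ}
    (hst : s ≤ t) {g : MvPolynomial σ ℂ} (hg : g ∈ D.filtration s)
    (hgt : g ∈ D.idealFiltration J t) : g ∈ D.idealFiltration J s := by
  induction t, hst using Int.leInduction with
  | base => exact hgt
  | succ t hst ih =>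
    refine ih (D.mem_idealFiltration_of_mul_mem hf (i := none) (by simp)
      (D.filtration_mono hst hg) ?_)
    have hone : dehomogenize (D.toricSystem none : MvPolynomial (Option σ) ℂ) = 1 := aeval_X _ none
    rwa [hone, mul_one]

lemma exists_forall_mem_filtration {ι : Type*} [Finite ι] (r : ι → MvPolynomial σ ℂ) :
    ∃ s, ∀ j, r j ∈ D.filtration s := by
  have hr : ∀ j, ∃ s, r j ∈ D.filtration s := fun j => by
    obtain ⟨s, hs⟩ := Finite.exists_le fun m : (r j).support => (D.N m : ℤ)
    exact ⟨s, D.mem_filtration.2 fun m hm => hs ⟨m, hm⟩⟩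
  choose s hs using hr
  obtain ⟨t, ht⟩ := Finite.exists_le s
  exact ⟨t, fun j => D.filtration_mono (ht j) (hs j)⟩

theorem filtration_inf_LIdeal [Fintype σ] (hf : Nondegenerate f) (s : ℤ) :
    D.filtration s ⊓ (LIdeal f).restrictScalars ℂ = D.idealFiltration Finset.univ s := by
  refine le_antisymm (fun g hg => ?_) (le_inf (D.idealFiltration_le _ s) fun g hg => ?_)
  · obtain ⟨hgs, hgL⟩ := hg
    obtain ⟨r, hr⟩ := Ideal.mem_span_range_iff_exists_fun.1 hgL
    obtain ⟨t, ht⟩ := D.exists_forall_mem_filtration r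
    refine D.mem_idealFiltration_of_le hf (le_max_left s (t + D.e)) hgs (mem_filteredSpan.2
      ⟨r, fun j => D.filtration_mono (le_sub_right_of_add_le (le_max_right _ _)) (ht j), hr⟩)
  · obtain ⟨r, -, rfl⟩ := mem_filteredSpan.1 hg
    exact Ideal.sum_mem _ fun j _ => Ideal.mul_mem_left _ _ (Ideal.subset_span ⟨j, rfl⟩)

end NewtonData

/-! ### Dimension count -/

section DimensionCount

variable {K V : Type*} [Field K] [AddCommGroup V] [Module K V]

lemma finrank_map_add_finrank_inf_ker {W : Type*} [AddCommGroup W] [Module K W] (φ : V →ₗ[K] W)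
    (B : Submodule K V) [FiniteDimensional K B] :
    Module.finrank K (B.map φ) + Module.finrank K (B ⊓ LinearMap.ker φ : Submodule K V) =
      Module.finrank K B := by
  rw [← LinearMap.finrank_range_add_finrank_ker (φ.domRestrict B), LinearMap.range_domRestrict,
    LinearMap.ker_domRestrict, ← Submodule.finrank_map_subtype_eq B, Submodule.map_comap_subtype]

lemma finrank_map_mkQ_sup {A B : Submodule K V} (hAB : A ≤ B) (L : Submodule K V)
    [FiniteDimensional K B] :
    (Module.finrank K ((B ⊔ L).map (A ⊔ L).mkQ) : ℤ) =
      (Module.finrank K B - Module.finrank K (B ⊓ L : Submodule K V)) -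
        (Module.finrank K A - Module.finrank K (A ⊓ L : Submodule K V)) := by
  have := Submodule.finiteDimensional_of_le hAB
  have hmap : (B ⊔ L).map (A ⊔ L).mkQ = B.map (A ⊔ L).mkQ := by
    rw [Submodule.map_sup, sup_eq_left]
    exact (Submodule.map_le_iff_le_comap.2 (by simp)).trans bot_le
  have hker := finrank_map_add_finrank_inf_ker (A ⊔ L).mkQ B
  have hinf : B ⊓ (A ⊔ L) = A ⊔ B ⊓ L := by rw [inf_comm, sup_inf_assoc_of_le L hAB, inf_comm]
  have hsup := Submodule.finrank_sup_add_finrank_inf_eq A (B ⊓ L)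
  rw [Submodule.ker_mkQ, hinf] at hker
  rw [← inf_assoc, inf_eq_left.2 hAB] at hsup
  rw [hmap]
  lia

lemma neg_one_pow_mul_fwdDiff_iter (a : ℤ → ℤ) (e : ℤ) (n : ℕ) (s : ℤ) :
    (-1) ^ n * (fwdDiff (-e))^[n] a s =
      ∑ k ∈ Finset.range (n + 1), (-1) ^ k * (n.choose k : ℤ) * a (s - k * e) := by
  rw [fwdDiff_iter_eq_sum_shift, Finset.mul_sum]
  refine Finset.sum_congr rfl fun k hk => ?_
  have hpow : (-1 : ℤ) ^ n * (-1) ^ (n - k) = (-1) ^ k := by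
    obtain ⟨m, rfl⟩ := Nat.exists_eq_add_of_le (Nat.lt_succ_iff.1 (Finset.mem_range.1 hk))
    rw [Nat.add_sub_cancel_left, pow_add, mul_assoc, ← mul_pow, neg_one_mul, neg_neg, one_pow,
      mul_one]
  rw [smul_eq_mul, ← mul_assoc, ← mul_assoc, hpow, nsmul_eq_mul, mul_neg, sub_eq_add_neg]

end DimensionCount

section FilteredSpan

variable {K A ι : Type*} [Field K] [CommRing A] [IsDomain A] [Algebra K A] {F : ℤ → Submodule K A}
  {e : ℤ} {L : ι → A}

lemma finrank_map_mulRight {y : A} (hy : y ≠ 0) (B : Submodule K A) :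
    Module.finrank K (B.map (LinearMap.mulRight K y)) = Module.finrank K B :=
  (Submodule.equivMapOfInjective _ (mul_left_injective₀ hy) B).finrank_eq.symm

variable [∀ s, FiniteDimensional K (F s)]

lemma finrank_filteredSpan_insert [DecidableEq ι] {i : ι} {J : Finset ι} (hLi : L i ≠ 0)
    (hmul : ∀ j, ∀ s, ∀ x ∈ F (s - e), x * L j ∈ F s)
    (hreg : ∀ s, ∀ x ∈ F (s - e), x * L i ∈ filteredSpan F e L J s →
      x ∈ filteredSpan F e L J (s - e)) (s : ℤ) :
    (Module.finrank K (filteredSpan F e L (insert i J) s) : ℤ) =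
      Module.finrank K (filteredSpan F e L J s) +
        (Module.finrank K (F (s - e)) - Module.finrank K (filteredSpan F e L J (s - e))) := by
  have := Submodule.finiteDimensional_of_le (filteredSpan_le (J := J) fun j => hmul j s)
  have hinf : (F (s - e)).map (LinearMap.mulRight K (L i)) ⊓ filteredSpan F e L J s =
      (filteredSpan F e L J (s - e)).map (LinearMap.mulRight K (L i)) := by
    refine le_antisymm ?_ (Submodule.map_le_iff_le_comap.2 fun x hx => ⟨Submodule.mem_map_of_mem
      (filteredSpan_le (fun j => hmul j _) hx), mul_mem_filteredSpan (hmul i _) hx⟩)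
    rintro _ ⟨⟨x, hx, rfl⟩, hxi⟩
    exact Submodule.mem_map_of_mem (hreg s x hx hxi)
  have h := Submodule.finrank_sup_add_finrank_inf_eq
    ((F (s - e)).map (LinearMap.mulRight K (L i))) (filteredSpan F e L J s)
  rw [← filteredSpan_insert, hinf, finrank_map_mulRight hLi, finrank_map_mulRight hLi] at h
  lia

theorem finrank_sub_finrank_filteredSpan (hL : ∀ i, L i ≠ 0)
    (hmul : ∀ j, ∀ s, ∀ x ∈ F (s - e), x * L j ∈ F s)
    (hreg : ∀ J : Finset ι, ∀ i ∉ J, ∀ s, ∀ x ∈ F (s - e), x * L i ∈ filteredSpan F e L J s →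
      x ∈ filteredSpan F e L J (s - e)) (J : Finset ι) (s : ℤ) :
    (Module.finrank K (F s) : ℤ) - Module.finrank K (filteredSpan F e L J s) =
      (-1) ^ J.card * (fwdDiff (-e))^[J.card] (fun t => (Module.finrank K (F t) : ℤ)) s := by
  classical
  induction J using Finset.induction_on generalizing s with
  | empty => rw [filteredSpan_empty, finrank_bot]; simp
  | insert i J hi ih =>
    rw [finrank_filteredSpan_insert (hL i) hmul (hreg J i hi), Finset.card_insert_of_notMem hi,
      Function.iterate_succ_apply', fwdDiff, ← sub_eq_add_neg, pow_succ, mul_neg_one, neg_mul,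
      mul_sub, ← ih, ← ih]
    ring

end FilteredSpan

namespace NewtonData

variable {σ : Type*} {f : MvPolynomial σ ℂ} (D : NewtonData f)

lemma finite_setOf_N_le [Finite σ] (s : ℤ) : {m | (D.N m : ℤ) ≤ s}.Finite := by
  have := (AddMonoid.fg_iff_addSubmonoid_fg _).2 (coneMonoid_fg D.finite_Λ)
  let height : D.cone →+ ℕ := (Finsupp.applyAddHom none).comp D.cone.subtype
  have hfin := finite_setOf_degree_lt (deg := height)
    (fun b hb => D.none_pos_of_mem_cone b.2 (by simpa using hb)) (s.toNat + 1)
  refine (hfin.image fun b : D.cone => (b : Option σ →₀ ℕ).some).subset fun m hm => ?_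
  rw [Set.mem_ofPred_eq] at hm
  refine ⟨⟨m.optionElim s.toNat, D.optionElim_mem_cone.2 (by lia)⟩, ?_,
    Finsupp.some_optionElim _ _⟩
  simp [height]

instance finiteDimensional_filtration [Finite σ] (s : ℤ) :
    FiniteDimensional ℂ (D.filtration s) :=
  have := (D.finite_setOf_N_le s).to_subtype
  Module.Finite.of_basis (basisRestrictSupport ℂ _)

lemma finrank_filtration (s : ℤ) :
    Module.finrank ℂ (D.filtration s) = {m | (D.N m : ℤ) ≤ s}.ncard :=
  Module.finrank_eq_nat_card_basis (basisRestrictSupport ℂ _)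

lemma finrank_filtration_floor_sub_ceil [Finite σ] (x : ℝ) :
    (Module.finrank ℂ (D.filtration ⌊x⌋) : ℤ) - Module.finrank ℂ (D.filtration (⌈x⌉ - 1)) =
      {m | (D.N m : ℝ) = x}.ncard := by
  have hdiff : {m | (D.N m : ℝ) = x} =
      {m | (D.N m : ℤ) ≤ ⌊x⌋} \ {m | (D.N m : ℤ) ≤ ⌈x⌉ - 1} := by
    ext m
    simp [Int.le_floor, Int.lt_ceil, le_antisymm_iff]
  have hsub : {m | (D.N m : ℤ) ≤ ⌈x⌉ - 1} ⊆ {m | (D.N m : ℤ) ≤ ⌊x⌋} := fun m hm =>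
    hm.trans (sub_le_iff_le_add.2 (Int.ceil_le_floor_add_one x))
  rw [finrank_filtration, finrank_filtration, hdiff,
    ← Set.ncard_sdiff_add_ncard_of_subset hsub (D.finite_setOf_N_le _)]
  push_cast
  ring

lemma Nle_eq_filtration [DecidableEq σ] (α : ℝ) : Nle f α = D.filtration ⌊D.e * α⌋ := by
  ext g
  refine (forall₂_congr fun m _ => ?_).trans D.mem_filtration.symm
  rw [Int.le_floor, Int.cast_natCast, D.coe_N, mul_le_mul_iff_right₀ (Nat.cast_pos.2 D.e_pos)]

lemma Nlt_eq_filtration [DecidableEq σ] (α : ℝ) : Nlt f α = D.filtration (⌈D.e * α⌉ - 1) := by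
  ext g
  refine (forall₂_congr fun m _ => ?_).trans D.mem_filtration.symm
  rw [Int.le_sub_one_iff, Int.lt_ceil, Int.cast_natCast, D.coe_N,
    mul_lt_mul_iff_right₀ (Nat.cast_pos.2 D.e_pos)]

lemma setOf_nu_natToR_eq [Finite σ] (γ : ℝ) :
    {v : σ → ℕ | nu f (natToR v) = γ} = (⇑) '' {m : σ →₀ ℕ | (D.N m : ℝ) = D.e * γ} := by
  have he : (D.e : ℝ) ≠ 0 := Nat.cast_ne_zero.2 D.e_pos.ne'
  ext v
  obtain ⟨m, rfl⟩ := Finsupp.equivFunOnFinite.surjective v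
  simp only [Set.mem_ofPred_eq, Set.mem_image, D.coe_N, mul_right_inj' he]
  exact ⟨fun h => ⟨m, h, rfl⟩, fun ⟨k, hk, hkm⟩ => DFunLike.coe_injective hkm ▸ hk⟩

end NewtonData

lemma toricDeriv_ne_zero {σ : Type*} {f : MvPolynomial σ ℂ} (hf : Convenient f) (i : σ) :
    toricDeriv f i ≠ 0 := by
  obtain ⟨k, hk, hcoeff⟩ := hf i
  refine ne_zero_iff.2 ⟨Finsupp.single i k, ?_⟩
  rw [coeff_toricDeriv, Finsupp.single_eq_same]
  exact mul_ne_zero (Nat.cast_ne_zero.2 (Nat.one_le_iff_ne_zero.1 hk)) hcoeff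

namespace NewtonData

variable {σ : Type*} [Fintype σ] {f : MvPolynomial σ ℂ} (D : NewtonData f)

lemma finrank_filtration_sub_finrank_inf (hconv : Convenient f) (hnd : Nondegenerate f) (s : ℤ) :
    (Module.finrank ℂ (D.filtration s) : ℤ) -
        Module.finrank ℂ (D.filtration s ⊓ (LIdeal f).restrictScalars ℂ : Submodule ℂ _) =
      ∑ k ∈ Finset.range (Fintype.card σ + 1), (-1) ^ k * ((Fintype.card σ).choose k : ℤ) *
        Module.finrank ℂ (D.filtration (s - k * D.e)) := by
  rw [D.filtration_inf_LIdeal hnd, finrank_sub_finrank_filteredSpan (toricDeriv_ne_zero hconv)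
    (fun i _ _ => D.mul_toricDeriv_mem_filtration i), neg_one_pow_mul_fwdDiff_iter,
    Finset.card_univ]
  intro J i hi s g hg hmul
  exact D.mem_idealFiltration_of_mul_toricDeriv_mem hnd hi hg (by rwa [sub_add_cancel])

theorem grDim_eq_sum_ncard [DecidableEq σ] (hconv : Convenient f) (hnd : Nondegenerate f) (α : ℝ) :
    (grDim f α : ℤ) = ∑ k ∈ Finset.range (Fintype.card σ + 1),
      (-1) ^ k * ((Fintype.card σ).choose k : ℤ) * {m | (D.N m : ℝ) = D.e * (α - k)}.ncard := by
  have hle : ⌈D.e * α⌉ - 1 ≤ ⌊D.e * α⌋ := sub_le_iff_le_add.2 (Int.ceil_le_floor_add_one _)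
  rw [grDim, grN, Nle_eq_filtration, Nlt_eq_filtration,
    finrank_map_mkQ_sup (D.filtration_mono hle),
    D.finrank_filtration_sub_finrank_inf hconv hnd, D.finrank_filtration_sub_finrank_inf hconv hnd,
    ← Finset.sum_sub_distrib]
  refine Finset.sum_congr rfl fun k _ => ?_
  have hshift : (D.e * (α - k) : ℝ) = D.e * α - (k * D.e : ℕ) := by
    push_cast
    ring
  rw [← mul_sub, ← D.finrank_filtration_floor_sub_ceil, hshift, Int.floor_sub_natCast,
    Int.ceil_sub_natCast, Nat.cast_mul, sub_right_comm]

end NewtonData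

theorem toric_newton_spectrum_series_general {σ : Type*} [Fintype σ] [DecidableEq σ]
    {f : MvPolynomial σ ℂ} (hconv : Convenient f) (hnd : Nondegenerate f) :
    (∀ β : ℝ, {v : σ → ℕ | nu f (natToR v) = β}.Finite) ∧
      ∀ α : ℝ, (grDim f α : ℤ) = ∑ k ∈ Finset.range (Fintype.card σ + 1),
        (-1) ^ k * ((Fintype.card σ).choose k : ℤ) *
          {v : σ → ℕ | nu f (natToR v) = α - k}.ncard := by
  obtain ⟨D⟩ := hconv.nonempty_newtonData
  have hinj : Function.Injective ((⇑) : (σ →₀ ℕ) → σ → ℕ) := DFunLike.coe_injective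
  simp only [D.setOf_nu_natToR_eq, Set.ncard_image_of_injective _ hinj]
  refine ⟨fun β => Set.Finite.image _ ?_, D.grDim_eq_sum_ncard hconv hnd⟩
  refine (D.finite_setOf_N_le ⌊D.e * β⌋).subset fun m hm => Int.le_floor.2 ?_
  exact_mod_cast hm.le

end ToricNewton

open ToricNewton in
/-- finiteness of the level sets of the Newton function, and the
formula `P_{gr^𝒩(ℬ/ℒ)}(z) = (1-z)^n Σ_{v ∈ ℕⁿ} z^{ν(v)}`, coefficientwise. -/
theorem toric_newton_spectrum_series {n : ℕ} (hn : 1 ≤ n) (f : MvPolynomial (Fin n) ℂ)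
    (hconv : Convenient f) (hnd : Nondegenerate f) :
    (∀ β : ℚ, {v : Fin n → ℕ | nu f (natToR v) = (β : ℝ)}.Finite) ∧
    (∀ α : ℚ, (grDim f (α : ℝ) : ℤ) =
      ∑ k ∈ Finset.range (n + 1),
        (-1 : ℤ) ^ k * (n.choose k : ℤ) *
          ({v : Fin n → ℕ | nu f (natToR v) = (α : ℝ) - (k : ℝ)}.ncard : ℤ)) := by
  have h := toric_newton_spectrum_series_general hconv hnd
  exact ⟨fun β => h.1 β, fun α => by simpa only [Fintype.card_fin] using h.2 α⟩
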